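/- Let Ω ⊂ ℝ^n be open, let Q = (Q^{ij}_{αβ}) (i, j = 1, …, n; α, β = 1, …, N) be a constant coefficient tensor satisfying |Q^{ij}_{αβ}| ≤ L for all indices and the strong Legendre–Hadamard condition Σ_{i,j,α,β} Q^{ij}_{αβ} λ_i λ_j μ^α μ^β ≥ ℓ |λ|² |μ|² for all λ ∈ ℝ^n, μ ∈ ℝ^N, for some constants 0 < ℓ ≤ L. Let v : Ω → ℝ^N be locally integrable and suppose that for every φ ∈ C_c^∞(Ω; ℝ^N) one has ∫_Ω Σ_{i,j,α,β} v^α(x) Q^{ij}_{αβ} ∂_i ∂_j φ^β(x) dx = 0 (the weak formulation of Σ Q^{ij}_{αβ} D_i v^α D_j φ^β = 0, written after a further integration by parts). Then there exists a smooth function ṽ : Ω → ℝ^N with v = ṽ almost everywhere in Ω, and there exists a constant c = c(n, N, ℓ, L) > 0 such that for every ball B_R(x₀) with closure contained in Ω one has sup_{B_{R/2}(x₀)} |Dṽ| ≤ (c / R^n) ∫_{B_R(x₀)} |Dṽ(x)| dx. -/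

import Mathlib

open MeasureTheory Metric
open scoped ContDiff SchwartzMap FourierTransform LineDeriv

/-- The symbol matrix `A(ξ)_{ab} = ∑ Q^{ij}_{ab} ξ_i ξ_j` of a second order system. -/
def symbolMatrix {n N : ℕ} (Q : Fin n → Fin n → Fin N → Fin N → ℝ)
    (ξ : EuclideanSpace ℝ (Fin n)) : Matrix (Fin N) (Fin N) ℝ :=
  Matrix.of fun a b => ∑ i, ∑ j, Q i j a b * ξ i * ξ j

/-- The strong Legendre–Hadamard condition with constant `ℓ`. -/
def LegendreHadamard {n N : ℕ} (ℓ : ℝ) (Q : Fin n → Fin n → Fin N → Fin N → ℝ) : Prop :=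
  ∀ (lam : Fin n → ℝ) (μ : Fin N → ℝ),
    ℓ * (∑ i, lam i ^ 2) * (∑ a, μ a ^ 2) ≤
      ∑ i, ∑ j, ∑ a, ∑ b, Q i j a b * lam i * lam j * μ a * μ b

lemma LegendreHadamard.det_symbolMatrix_ne_zero {n N : ℕ} {ℓ : ℝ} (hℓ : 0 < ℓ)
    {Q : Fin n → Fin n → Fin N → Fin N → ℝ} (hQ : LegendreHadamard ℓ Q)
    {ξ : EuclideanSpace ℝ (Fin n)} (hξ : ξ ≠ 0) : (symbolMatrix Q ξ).det ≠ 0 := by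
  intro h
  obtain ⟨μ, hμ, hA⟩ := Matrix.exists_mulVec_eq_zero_iff.2 h
  have key := hQ (fun i => ξ i) μ
  have h0 : ∑ i, ∑ j, ∑ a, ∑ b, Q i j a b * ξ i * ξ j * μ a * μ b = 0 := by
    calc _ = ∑ a, μ a * ((symbolMatrix Q ξ).mulVec μ) a := by
          simp only [symbolMatrix, Matrix.mulVec, dotProduct, Matrix.of_apply, Finset.sum_mul,
            Finset.mul_sum]
          simp_rw [Finset.sum_comm (s := (Finset.univ : Finset (Fin n)))
            (t := (Finset.univ : Finset (Fin N)))]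
          refine Finset.sum_congr rfl fun a _ => Finset.sum_congr rfl fun b _ =>
            Finset.sum_congr rfl fun i _ => Finset.sum_congr rfl fun j _ => by ring
      _ = 0 := by simp [hA]
  rw [h0] at key
  have h1 : 0 < ∑ i, ξ i ^ 2 := by
    rw [← EuclideanSpace.real_norm_sq_eq]; positivity
  have h2 : 0 < ∑ a, μ a ^ 2 := by
    obtain ⟨a, ha⟩ := Function.ne_iff.1 hμ
    exact Finset.sum_pos' (fun _ _ => sq_nonneg _) ⟨a, Finset.mem_univ _, by
      have : μ a ≠ 0 := ha
      positivity⟩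
  have : 0 < ℓ * (∑ i, ξ i ^ 2) * (∑ a, μ a ^ 2) := by positivity
  linarith

lemma contDiff_symbolMatrix_apply {n N : ℕ} (a b : Fin N) :
    ContDiff ℝ ∞ fun p : (Fin n → Fin n → Fin N → Fin N → ℝ) × EuclideanSpace ℝ (Fin n) =>
      symbolMatrix p.1 p.2 a b := by
  simp only [symbolMatrix, Matrix.of_apply]
  fun_prop

lemma contDiff_matrix_det {G : Type*} [NormedAddCommGroup G] [NormedSpace ℝ G] {N : ℕ}
    {M : G → Matrix (Fin N) (Fin N) ℝ} (hM : ∀ a b, ContDiff ℝ ∞ fun p => M p a b) :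
    ContDiff ℝ ∞ fun p => (M p).det := by
  simp only [Matrix.det_apply']
  exact ContDiff.sum fun σ _ => contDiff_const.mul (contDiff_prod fun i _ => hM _ _)

lemma contDiff_matrix_adjugate {G : Type*} [NormedAddCommGroup G] [NormedSpace ℝ G] {N : ℕ}
    {M : G → Matrix (Fin N) (Fin N) ℝ} (hM : ∀ a b, ContDiff ℝ ∞ fun p => M p a b) (b c : Fin N) :
    ContDiff ℝ ∞ fun p => (M p).adjugate b c := by
  simp only [Matrix.adjugate_apply]
  refine contDiff_matrix_det fun a b' => ?_
  by_cases h : a = c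
  · subst h; simpa using contDiff_const
  · simpa [Matrix.updateRow_ne h] using hM a b'

/-- The difference of two dilated frequency cutoffs, multiplied by the inverse of the symbol. -/
noncomputable def localizedInverse {n N : ℕ} (ψ : EuclideanSpace ℝ (Fin n) → ℝ) (b c : Fin N)
    (p : (Fin n → Fin n → Fin N → Fin N → ℝ) × EuclideanSpace ℝ (Fin n)) : ℝ :=
  ψ p.2 * (symbolMatrix p.1 p.2)⁻¹ b c

lemma contDiffAt_localizedInverse {n N : ℕ} {ψ : EuclideanSpace ℝ (Fin n) → ℝ}
    (hψ : ContDiff ℝ ∞ ψ) (hψ0 : ∀ ξ, ‖ξ‖ < 1 → ψ ξ = 0) {ℓ : ℝ} (hℓ : 0 < ℓ)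
    {Q : Fin n → Fin n → Fin N → Fin N → ℝ} (hQ : LegendreHadamard ℓ Q) (b c : Fin N)
    (ξ : EuclideanSpace ℝ (Fin n)) : ContDiffAt ℝ ∞ (localizedInverse ψ b c) (Q, ξ) := by
  by_cases hξ : ξ = 0
  · have : localizedInverse (N := N) ψ b c =ᶠ[nhds (Q, ξ)] fun _ => 0 := by
      have : ∀ᶠ p : (Fin n → Fin n → Fin N → Fin N → ℝ) × EuclideanSpace ℝ (Fin n) in nhds (Q, ξ),
          ‖p.2‖ < 1 := by
        refine (continuous_snd.norm.tendsto (Q, ξ)).eventually_lt_const ?_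
        simp [hξ]
      filter_upwards [this] with p hp
      simp [localizedInverse, hψ0 _ hp]
    exact contDiffAt_const.congr_of_eventuallyEq this
  · have hdet := hQ.det_symbolMatrix_ne_zero hℓ hξ
    have e : localizedInverse (N := N) ψ b c = fun p =>
        ψ p.2 * ((symbolMatrix p.1 p.2).det⁻¹ * (symbolMatrix p.1 p.2).adjugate b c) := by
      ext p
      simp [localizedInverse, Matrix.inv_def]
    rw [e]
    refine (hψ.comp contDiff_snd).contDiffAt.mul (ContDiffAt.mul (ContDiffAt.inv ?_ hdet) ?_)
    · exact (contDiff_matrix_det contDiff_symbolMatrix_apply).contDiffAt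
    · exact (contDiff_matrix_adjugate contDiff_symbolMatrix_apply b c).contDiffAt

lemma isCompact_setOf_legendreHadamard (n N : ℕ) (ℓ L : ℝ) :
    IsCompact {Q : Fin n → Fin n → Fin N → Fin N → ℝ |
      (∀ i j a b, |Q i j a b| ≤ L) ∧ LegendreHadamard ℓ Q} := by
  refine Metric.isCompact_of_isClosed_isBounded ?_ ?_
  · simp only [LegendreHadamard, Set.ofPred_and, Set.ofPred_forall]
    refine IsClosed.inter ?_ ?_
    · exact isClosed_iInter fun i => isClosed_iInter fun j => isClosed_iInter fun a =>
        isClosed_iInter fun b => isClosed_le (by fun_prop) (by fun_prop)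
    · exact isClosed_iInter fun i => isClosed_iInter fun j =>
        isClosed_le (by fun_prop) (by fun_prop)
  · refine (Metric.isBounded_closedBall (x := 0) (r := |L|)).subset fun Q hQ => ?_
    rw [mem_closedBall_zero_iff]
    have hL : 0 ≤ |L| := abs_nonneg _
    refine (pi_norm_le_iff_of_nonneg hL).2 fun i => (pi_norm_le_iff_of_nonneg hL).2 fun j =>
      (pi_norm_le_iff_of_nonneg hL).2 fun a => (pi_norm_le_iff_of_nonneg hL).2 fun b => ?_
    exact (hQ.1 i j a b).trans (le_abs_self L)

lemma ContDiffAt.norm_iteratedFDeriv_comp_add_clm_le {G H F : Type*} [NormedAddCommGroup G]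
    [NormedSpace ℝ G] [NormedAddCommGroup H] [NormedSpace ℝ H] [NormedAddCommGroup F]
    [NormedSpace ℝ F] {f : G → F} {k : ℕ} (g : H →L[ℝ] G) (y : G) (x : H)
    (hf : ContDiffAt ℝ k f (y + g x)) :
    ‖iteratedFDeriv ℝ k (fun z => f (y + g z)) x‖ ≤ ‖iteratedFDeriv ℝ k f (y + g x)‖ * ‖g‖ ^ k := by
  obtain ⟨u, hu, hfu⟩ := hf.contDiffOn le_rfl (by simp)
  obtain ⟨s, hsu, hs, hxs⟩ := _root_.mem_nhds_iff.1 hu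
  set f' : G → F := fun z => f (y + z) with hf'
  set s' : Set G := (fun z => y + z) ⁻¹' s
  have hs' : IsOpen s' := hs.preimage (by fun_prop)
  have hfs : ContDiffOn ℝ k f' s' :=
    (hfu.mono hsu).comp (contDiff_const.add contDiff_id).contDiffOn fun _ h => h
  have hgs : IsOpen (g ⁻¹' s') := hs'.preimage g.continuous
  have h1 := g.iteratedFDerivWithin_comp_right hfs hs'.uniqueDiffOn hgs.uniqueDiffOn
    (x := x) hxs le_rfl
  rw [iteratedFDerivWithin_of_isOpen k hgs hxs, iteratedFDerivWithin_of_isOpen k hs' hxs,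
    iteratedFDeriv_comp_add_left] at h1
  change ‖iteratedFDeriv ℝ k (f' ∘ g) x‖ ≤ _
  rw [h1]
  refine (ContinuousMultilinearMap.norm_compContinuousLinearMap_le _ _).trans ?_
  simp

lemma exists_iteratedFDeriv_localizedInverse_le {n N : ℕ} {ψ : EuclideanSpace ℝ (Fin n) → ℝ}
    (hψ : ContDiff ℝ ∞ ψ) (hψ0 : ∀ ξ, ‖ξ‖ < 1 → ψ ξ = 0) {ρ : ℝ}
    {ℓ : ℝ} (L : ℝ) (hℓ : 0 < ℓ) (k : ℕ) :
    ∃ C : ℝ, ∀ Q : Fin n → Fin n → Fin N → Fin N → ℝ, (∀ i j a b, |Q i j a b| ≤ L) →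
      LegendreHadamard ℓ Q → ∀ b c, ∀ ξ, ‖ξ‖ ≤ ρ →
        ‖iteratedFDeriv ℝ k (fun ζ => localizedInverse ψ b c (Q, ζ)) ξ‖ ≤ C := by
  have main : ∀ b c : Fin N, ∃ C : ℝ, ∀ Q : Fin n → Fin n → Fin N → Fin N → ℝ,
      (∀ i j a b, |Q i j a b| ≤ L) → LegendreHadamard ℓ Q → ∀ ξ, ‖ξ‖ ≤ ρ →
        ‖iteratedFDeriv ℝ k (fun ζ => localizedInverse ψ b c (Q, ζ)) ξ‖ ≤ C := by
    intro b c
    have hK := (isCompact_setOf_legendreHadamard n N ℓ L).prod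
      (isCompact_closedBall (0 : EuclideanSpace ℝ (Fin n)) ρ)
    obtain ⟨C, hC⟩ := hK.exists_bound_of_continuousOn
      (f := iteratedFDeriv ℝ k (localizedInverse (N := N) ψ b c)) (by
        rintro ⟨Q, ξ⟩ ⟨hQ, -⟩
        exact ((contDiffAt_localizedInverse hψ hψ0 hℓ hQ.2 b c ξ).continuousAt_iteratedFDeriv
          (by exact_mod_cast le_top)).continuousWithinAt)
    refine ⟨C * ‖ContinuousLinearMap.inr ℝ (Fin n → Fin n → Fin N → Fin N → ℝ)
      (EuclideanSpace ℝ (Fin n))‖ ^ k, fun Q hQL hQ ξ hξ => ?_⟩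
    have hC' := hC (Q, ξ) ⟨⟨hQL, hQ⟩, by simpa using hξ⟩
    have hsmooth : ∀ ζ, ContDiffAt ℝ k (localizedInverse (N := N) ψ b c) (Q, ζ) := fun ζ =>
      (contDiffAt_localizedInverse hψ hψ0 hℓ hQ b c ζ).of_le (by exact_mod_cast le_top)
    have := ContDiffAt.norm_iteratedFDeriv_comp_add_clm_le (k := k)
      (ContinuousLinearMap.inr ℝ (Fin n → Fin n → Fin N → Fin N → ℝ) (EuclideanSpace ℝ (Fin n)))
      (Q, 0) ξ (by simpa using hsmooth ξ)
    simp only [ContinuousLinearMap.inr_apply, Prod.mk_add_mk, add_zero, zero_add] at this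
    exact this.trans (by gcongr)
  choose C hC using main
  refine ⟨∑ b, ∑ c, |C b c|, fun Q hQL hQ b c ξ hξ => (hC b c Q hQL hQ ξ hξ).trans ?_⟩
  refine (le_abs_self _).trans ?_
  refine (Finset.single_le_sum (f := fun c => |C b c|) (fun _ _ => abs_nonneg _)
    (Finset.mem_univ c)).trans ?_
  exact Finset.single_le_sum (f := fun b => ∑ c, |C b c|)
    (fun _ _ => Finset.sum_nonneg fun _ _ => abs_nonneg _) (Finset.mem_univ b)

/-- The real part of the inverse Fourier transform on Schwartz functions. -/
noncomputable def reFourierInv (n : ℕ) :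
    𝓢(EuclideanSpace ℝ (Fin n), ℂ) →L[ℝ] 𝓢(EuclideanSpace ℝ (Fin n), ℝ) :=
  (SchwartzMap.postcompCLM Complex.reCLM).comp
    (FourierTransform.fourierInvCLM ℝ 𝓢(EuclideanSpace ℝ (Fin n), ℂ))

lemma reFourierInv_apply {n : ℕ} (f : 𝓢(EuclideanSpace ℝ (Fin n), ℂ))
    (z : EuclideanSpace ℝ (Fin n)) : reFourierInv n f z = (𝓕⁻ f z).re := rfl

lemma lineDerivOp_reFourierInv {n : ℕ} (f : 𝓢(EuclideanSpace ℝ (Fin n), ℂ))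
    (m : EuclideanSpace ℝ (Fin n)) :
    ∂_{m} (reFourierInv n f) = reFourierInv n
      ((2 * Real.pi * Complex.I) • SchwartzMap.smulLeftCLM ℂ (inner ℝ · m) f) := by
  ext z
  rw [reFourierInv_apply, ← SchwartzMap.lineDerivOp_fourierInv_eq,
    SchwartzMap.lineDerivOp_apply_eq_fderiv, SchwartzMap.lineDerivOp_apply_eq_fderiv]
  have h : HasFDerivAt (fun y => (𝓕⁻ f y).re)
      (Complex.reCLM.comp (fderiv ℝ (𝓕⁻ f : 𝓢(EuclideanSpace ℝ (Fin n), ℂ)) z)) z :=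
    Complex.reCLM.hasFDerivAt.comp z
      (SchwartzMap.differentiableAt (𝓕⁻ f : 𝓢(EuclideanSpace ℝ (Fin n), ℂ))).hasFDerivAt
  have h' : HasFDerivAt (reFourierInv n f)
    (Complex.reCLM.comp (fderiv ℝ (𝓕⁻ f : 𝓢(EuclideanSpace ℝ (Fin n), ℂ)) z)) z := h
  rw [h'.fderiv]
  rfl

lemma lineDerivOp_lineDerivOp_reFourierInv {n : ℕ} (f g : 𝓢(EuclideanSpace ℝ (Fin n), ℂ))
    (i j : Fin n) (h : ∀ ξ, g ξ = -(4 * Real.pi ^ 2 * (ξ i * ξ j) : ℝ) * f ξ) :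
    ∂_{EuclideanSpace.single j (1 : ℝ)} (∂_{EuclideanSpace.single i (1 : ℝ)} (reFourierInv n f)) =
      reFourierInv n g := by
  rw [lineDerivOp_reFourierInv, lineDerivOp_reFourierInv]
  congr 1
  ext ξ
  have ht : ∀ m : EuclideanSpace ℝ (Fin n), (inner ℝ · m).HasTemperateGrowth := fun m => by fun_prop
  rw [smul_apply, SchwartzMap.smulLeftCLM_apply_apply (ht _), smul_apply,
    SchwartzMap.smulLeftCLM_apply_apply (ht _), h]
  simp only [smul_eq_mul, EuclideanSpace.inner_single_right, Complex.real_smul]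
  simp
  linear_combination 4 * Real.pi ^ 2 * ξ i * ξ j * f ξ * Complex.I_sq

lemma integral_reFourierInv {n : ℕ} (f : 𝓢(EuclideanSpace ℝ (Fin n), ℂ)) :
    ∫ z, reFourierInv n f z = (f 0).re := by
  have h : 𝓕 (𝓕⁻ f) = f := FourierTransform.fourier_fourierInv_eq f
  have h0 : 𝓕 (𝓕⁻ f) 0 = ∫ z, 𝓕⁻ f z := by
    rw [SchwartzMap.fourier_coe, Real.fourier_eq]
    simp
  rw [h] at h0
  rw [h0]
  simp only [reFourierInv_apply]
  exact integral_re (𝕜 := ℂ) (SchwartzMap.integrable _)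

lemma reFourierInv_dilation {n : ℕ} (f g : 𝓢(EuclideanSpace ℝ (Fin n), ℂ))
    (h : ∀ ξ, g ξ = f ((2 : ℝ)⁻¹ • ξ)) (z : EuclideanSpace ℝ (Fin n)) :
    reFourierInv n g z = 2 ^ n * reFourierInv n f ((2 : ℝ) • z) := by
  have key : 𝓕⁻ g z = ((2 : ℝ) ^ n) • 𝓕⁻ f ((2 : ℝ) • z) := by
    rw [SchwartzMap.fourierInv_coe, SchwartzMap.fourierInv_coe, Real.fourierInv_eq,
      Real.fourierInv_eq]
    have := Measure.integral_comp_inv_smul (volume : Measure (EuclideanSpace ℝ (Fin n)))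
      (fun ξ => (Real.fourierChar (inner ℝ ξ ((2 : ℝ) • z))) • f ξ) (2 : ℝ)
    simp only [finrank_euclideanSpace_fin] at this
    rw [abs_of_pos (by positivity)] at this
    rw [← this]
    refine integral_congr_ae (.of_forall fun ξ => ?_)
    beta_reduce
    rw [h]
    have : inner ℝ ((2 : ℝ)⁻¹ • ξ) ((2 : ℝ) • z) = inner ℝ ξ z := by
      simp [real_inner_smul_left, real_inner_smul_right]
    rw [this]
  rw [reFourierInv_apply, reFourierInv_apply, key]
  simp only [Complex.real_smul, Complex.re_ofReal_mul]

lemma exists_seminorm_map_le {E F : Type*} [NormedAddCommGroup E] [NormedSpace ℝ E]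
    [NormedAddCommGroup F] [NormedSpace ℝ F] {ι : Type*} (T : 𝓢(E, F) →L[ℝ] 𝓢(E, F))
    (f : ι → 𝓢(E, F)) (hf : ∀ k l, ∃ M, ∀ i, SchwartzMap.seminorm ℝ k l (f i) ≤ M) (k l : ℕ) :
    ∃ M, ∀ i, SchwartzMap.seminorm ℝ k l (T (f i)) ≤ M := by
  have hb : Bornology.IsVonNBounded ℝ (Set.range f) := by
    rw [(schwartz_withSeminorms ℝ E F).isVonNBounded_iff_seminorm_bounded]
    rintro ⟨k, l⟩
    obtain ⟨M, hM⟩ := hf k l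
    refine ⟨|M| + 1, by positivity, ?_⟩
    rintro _ ⟨i, rfl⟩
    exact (hM i).trans_lt (by linarith [le_abs_self M])
  have hT := hb.image T
  rw [(schwartz_withSeminorms ℝ E F).isVonNBounded_iff_seminorm_bounded] at hT
  obtain ⟨M, -, hM⟩ := hT (k, l)
  exact ⟨M, fun i => (hM _ ⟨_, ⟨i, rfl⟩, rfl⟩).le⟩

/-- A Schwartz function of integral one whose dyadic differences are, uniformly in the elliptic
system, the image under the system of Schwartz functions. -/
theorem exists_dyadic_parametrix (n N : ℕ) {ℓ : ℝ} (L : ℝ) (hℓ : 0 < ℓ) :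
    ∃ (X : 𝓢(EuclideanSpace ℝ (Fin n), ℝ)) (C : ℝ), ∫ z, X z = 1 ∧
      ∀ Q : Fin n → Fin n → Fin N → Fin N → ℝ, (∀ i j a b, |Q i j a b| ≤ L) →
        LegendreHadamard ℓ Q → ∃ P : Fin N → Fin N → 𝓢(EuclideanSpace ℝ (Fin n), ℝ),
          (∀ a c z, ∑ i, ∑ j, ∑ b, Q i j a b *
            (∂_{EuclideanSpace.single j (1 : ℝ)} (∂_{EuclideanSpace.single i (1 : ℝ)} (P b c))) z =
              if a = c then 2 ^ n * X ((2 : ℝ) • z) - X z else 0) ∧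
          ∀ b c, SchwartzMap.seminorm ℝ (n + 1) 0 (P b c) ≤ C ∧
            SchwartzMap.seminorm ℝ (n + 1) 1 (P b c) ≤ C := by
  let χ : ContDiffBump (0 : EuclideanSpace ℝ (Fin n)) := ⟨1, 2, one_pos, one_lt_two⟩
  set ψ : EuclideanSpace ℝ (Fin n) → ℝ := fun ξ => χ ((2 : ℝ)⁻¹ • ξ) - χ ξ with hψdef
  have hψ : ContDiff ℝ ∞ ψ :=
    (χ.contDiff.comp (contDiff_const_smul _)).sub χ.contDiff
  have hψ0 : ∀ ξ, ‖ξ‖ < 1 → ψ ξ = 0 := by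
    intro ξ hξ
    have h1 : χ ξ = 1 := χ.one_of_mem_closedBall (by simpa using hξ.le)
    have h2 : χ ((2 : ℝ)⁻¹ • ξ) = 1 := χ.one_of_mem_closedBall (by
      simp only [mem_closedBall, dist_zero_right, norm_smul]; norm_num; linarith)
    simp [hψdef, h1, h2]
  have hψ4 : ∀ ξ, 4 ≤ ‖ξ‖ → ψ ξ = 0 := by
    intro ξ hξ
    have h1 : χ ξ = 0 := χ.zero_of_le_dist (by simp [χ]; linarith)
    have h2 : χ ((2 : ℝ)⁻¹ • ξ) = 0 := χ.zero_of_le_dist (by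
      simp only [dist_zero_right, norm_smul, χ]; norm_num; linarith)
    simp [hψdef, h1, h2]
  let ι := {Q : Fin n → Fin n → Fin N → Fin N → ℝ //
    (∀ i j a b, |Q i j a b| ≤ L) ∧ LegendreHadamard ℓ Q}
  have hsupp : ∀ (Q : ι) (b c : Fin N),
      tsupport (fun ζ => localizedInverse ψ b c (Q.1, ζ)) ⊆ closedBall 0 4 := by
    intro Q b c
    refine closure_minimal (fun ζ hζ => ?_) isClosed_closedBall
    by_contra h
    rw [mem_closedBall_zero_iff, not_le] at h
    exact hζ (by simp [localizedInverse, hψ4 ζ h.le])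
  have hcomp : ∀ (Q : ι) (b c : Fin N),
      HasCompactSupport (fun ζ => localizedInverse ψ b c (Q.1, ζ)) := fun Q b c =>
    HasCompactSupport.of_support_subset_isCompact (isCompact_closedBall 0 4)
      (subset_closure.trans (hsupp Q b c))
  have hsm : ∀ (Q : ι) (b c : Fin N),
      ContDiff ℝ ∞ (fun ζ => localizedInverse ψ b c (Q.1, ζ)) := fun Q b c =>
    contDiff_iff_contDiffAt.2 fun ξ =>
      ContDiffAt.comp (g := localizedInverse ψ b c) (f := fun ζ => (Q.1, ζ)) ξ
        (contDiffAt_localizedInverse hψ hψ0 hℓ Q.2.2 b c ξ)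
        (contDiff_const.prodMk contDiff_id).contDiffAt
  let q : ι → Fin N → Fin N → 𝓢(EuclideanSpace ℝ (Fin n), ℝ) := fun Q b c =>
    (hcomp Q b c).toSchwartzMap (hsm Q b c)
  have hq : ∀ Q b c ξ, q Q b c ξ = ψ ξ * (symbolMatrix Q.1 ξ)⁻¹ b c := fun _ _ _ _ => rfl
  let J : 𝓢(EuclideanSpace ℝ (Fin n), ℝ) →L[ℝ] 𝓢(EuclideanSpace ℝ (Fin n), ℂ) :=
    SchwartzMap.postcompCLM Complex.ofRealCLM
  have hJ : ∀ f ξ, J f ξ = (f ξ : ℂ) := fun _ _ => rfl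
  let T : 𝓢(EuclideanSpace ℝ (Fin n), ℝ) →L[ℝ] 𝓢(EuclideanSpace ℝ (Fin n), ℝ) :=
    (-(4 * Real.pi ^ 2)⁻¹ : ℝ) • (reFourierInv n).comp J
  have hbound : ∀ k l, ∃ M, ∀ i : ι × Fin N × Fin N,
      SchwartzMap.seminorm ℝ k l (q i.1 i.2.1 i.2.2) ≤ M := by
    intro k l
    obtain ⟨C, hC⟩ := exists_iteratedFDeriv_localizedInverse_le (N := N) hψ hψ0 (ρ := 4) L hℓ l
    refine ⟨4 ^ k * |C|, fun i => SchwartzMap.seminorm_le_bound ℝ k l _ (by positivity) fun ξ => ?_⟩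
    by_cases hξ : ‖ξ‖ ≤ 4
    · refine mul_le_mul (by gcongr) ?_ (norm_nonneg _) (by positivity)
      exact (hC i.1.1 i.1.2.1 i.1.2.2 i.2.1 i.2.2 ξ hξ).trans (le_abs_self C)
    · have : iteratedFDeriv ℝ l (q i.1 i.2.1 i.2.2) ξ = 0 := by
        by_contra h
        have h1 := support_iteratedFDeriv_subset (𝕜 := ℝ) l h
        exact hξ (by simpa using hsupp i.1 i.2.1 i.2.2 h1)
      rw [this]
      simp only [norm_zero, mul_zero]
      positivity
  obtain ⟨M₀, hM₀⟩ := exists_seminorm_map_le T (fun i : ι × Fin N × Fin N => q i.1 i.2.1 i.2.2)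
    hbound (n + 1) 0
  obtain ⟨M₁, hM₁⟩ := exists_seminorm_map_le T (fun i : ι × Fin N × Fin N => q i.1 i.2.1 i.2.2)
    hbound (n + 1) 1
  let χS : 𝓢(EuclideanSpace ℝ (Fin n), ℝ) := χ.hasCompactSupport.toSchwartzMap χ.contDiff
  have hχS : ∀ ξ, χS ξ = χ ξ := fun _ => rfl
  have hχ2 : HasCompactSupport fun ξ => χ ((2 : ℝ)⁻¹ • ξ) :=
    χ.hasCompactSupport.comp_smul (by norm_num)
  let χ2 : 𝓢(EuclideanSpace ℝ (Fin n), ℝ) :=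
    hχ2.toSchwartzMap (χ.contDiff.comp (contDiff_const_smul _))
  have hχ2 : ∀ ξ, χ2 ξ = χ ((2 : ℝ)⁻¹ • ξ) := fun _ => rfl
  refine ⟨reFourierInv n (J χS), max M₀ M₁, ?_, fun Q hQL hQ => ?_⟩
  · rw [integral_reFourierInv, hJ, hχS, Complex.ofReal_re]
    exact χ.one_of_mem_closedBall (by simp [χ])
  let Q' : ι := ⟨Q, hQL, hQ⟩
  refine ⟨fun b c => T (q Q' b c), fun a c z => ?_, fun b c => ⟨(hM₀ (Q', b, c)).trans
    (le_max_left _ _), (hM₁ (Q', b, c)).trans (le_max_right _ _)⟩⟩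
  have hmul : ∀ i j, ∃ g : Fin N → 𝓢(EuclideanSpace ℝ (Fin n), ℝ), ∀ b ξ,
      g b ξ = ξ i * ξ j * q Q' b c ξ := by
    intro i j
    have ht : Function.HasTemperateGrowth fun ξ : EuclideanSpace ℝ (Fin n) => ξ i * ξ j :=
      (EuclideanSpace.proj (𝕜 := ℝ) i).hasTemperateGrowth.mul
        (EuclideanSpace.proj (𝕜 := ℝ) j).hasTemperateGrowth
    refine ⟨fun b => SchwartzMap.smulLeftCLM ℝ (fun ξ => ξ i * ξ j) (q Q' b c), fun b ξ => ?_⟩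
    rw [SchwartzMap.smulLeftCLM_apply_apply ht, smul_eq_mul]
  choose g hg using hmul
  have hD : ∀ i j b, ∂_{EuclideanSpace.single j (1 : ℝ)}
      (∂_{EuclideanSpace.single i (1 : ℝ)} (T (q Q' b c))) = reFourierInv n (J (g i j b)) := by
    intro i j b
    have hTq : T (q Q' b c) = reFourierInv n (J ((-(4 * Real.pi ^ 2)⁻¹ : ℝ) • q Q' b c)) := by
      simp only [T, map_smul]; rfl
    rw [hTq]
    refine lineDerivOp_lineDerivOp_reFourierInv _ _ i j fun ξ => ?_
    rw [hJ, hJ, hg, smul_apply, smul_eq_mul]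
    rw [← Complex.ofReal_neg, ← Complex.ofReal_mul]
    congr 1
    have := Real.pi_ne_zero
    field_simp
  have hsum : ∑ i, ∑ j, ∑ b, Q i j a b • g i j b = if a = c then χ2 - χS else 0 := by
    ext ξ
    have h1 : (∑ i, ∑ j, ∑ b, Q i j a b • g i j b) ξ =
        ψ ξ * (symbolMatrix Q ξ * (symbolMatrix Q ξ)⁻¹) a c := by
      simp only [sum_apply, smul_apply, smul_eq_mul, hg, hq, Matrix.mul_apply, symbolMatrix,
        Matrix.of_apply, Finset.mul_sum, Finset.sum_mul]
      rw [Finset.sum_congr rfl fun i _ => Finset.sum_comm, Finset.sum_comm]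
      refine Finset.sum_congr rfl fun b _ => Finset.sum_congr rfl fun i _ =>
        Finset.sum_congr rfl fun j _ => ?_
      ring
    rw [h1]
    by_cases hξ : ξ = 0
    · subst hξ
      have h0 := hψ0 0 (by simp)
      rw [h0]
      split_ifs
      · rw [sub_apply, hχS, hχ2]; simp
      · simp
    · have hdet := hQ.det_symbolMatrix_ne_zero hℓ hξ
      rw [Matrix.mul_nonsing_inv _ (isUnit_iff_ne_zero.2 hdet), Matrix.one_apply]
      split_ifs
      · rw [sub_apply, hχS, hχ2]; simp [hψdef]
      · simp
  have := congrArg (fun f => reFourierInv n (J f) z) hsum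
  simp only [map_sum, map_smul, sum_apply, smul_apply, smul_eq_mul] at this
  simp only [hD, this]
  split_ifs
  · rw [map_sub, map_sub, sub_apply, reFourierInv_dilation (J χS) (J χ2) (fun ξ => ?_)]
    rw [hJ, hJ, hχ2, hχS]
  · simp

/-- The partial derivative in the `i`-th coordinate direction. -/
noncomputable def partialDeriv {n : ℕ} (i : Fin n) (f : EuclideanSpace ℝ (Fin n) → ℝ) :
    EuclideanSpace ℝ (Fin n) → ℝ :=
  fun x => fderiv ℝ f x (EuclideanSpace.single i 1)

section partialDeriv

variable {n : ℕ} {f g : EuclideanSpace ℝ (Fin n) → ℝ}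

lemma ContDiff.partialDeriv (hf : ContDiff ℝ ∞ f) (i : Fin n) :
    ContDiff ℝ ∞ (partialDeriv i f) :=
  (hf.fderiv_right (m := ∞) (by simp)).clm_apply contDiff_const

lemma tsupport_partialDeriv_subset (i : Fin n) : tsupport (partialDeriv i f) ⊆ tsupport f :=
  tsupport_fderiv_apply_subset ℝ _

lemma partialDeriv_mul (hf : ContDiff ℝ ∞ f) (hg : ContDiff ℝ ∞ g) (i : Fin n) :
    partialDeriv i (fun x => f x * g x) =
      fun x => partialDeriv i f x * g x + f x * partialDeriv i g x := by
  ext x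
  have h1 := (hf.differentiable (by simp)) x
  have h2 := (hg.differentiable (by simp)) x
  simp only [partialDeriv]
  rw [fderiv_fun_mul h1 h2]
  simp only [add_apply, smul_apply, smul_eq_mul]
  ring

lemma partialDeriv_add (hf : ContDiff ℝ ∞ f) (hg : ContDiff ℝ ∞ g) (i : Fin n) :
    partialDeriv i (fun x => f x + g x) =
      fun x => partialDeriv i f x + partialDeriv i g x := by
  ext x
  have h1 := (hf.differentiable (by simp)) x
  have h2 := (hg.differentiable (by simp)) x
  simp only [partialDeriv]
  rw [fderiv_fun_add h1 h2]
  simp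

lemma partialDeriv_partialDeriv_mul (hf : ContDiff ℝ ∞ f) (hg : ContDiff ℝ ∞ g) (i j : Fin n)
    (x : EuclideanSpace ℝ (Fin n)) :
    partialDeriv j (partialDeriv i fun x => f x * g x) x =
      f x * partialDeriv j (partialDeriv i g) x +
        (partialDeriv i f x * partialDeriv j g x + partialDeriv j f x * partialDeriv i g x +
          partialDeriv j (partialDeriv i f) x * g x) := by
  rw [partialDeriv_mul hf hg, partialDeriv_add ((hf.partialDeriv i).mul hg)
    (hf.mul (hg.partialDeriv i)), partialDeriv_mul (hf.partialDeriv i) hg,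
    partialDeriv_mul hf (hg.partialDeriv i)]
  ring

lemma partialDeriv_const_mul_comp_smul (hf : ContDiff ℝ ∞ f) (i : Fin n) (s t : ℝ) :
    partialDeriv i (fun x => s * f (t • x)) = fun x => (s * t) * partialDeriv i f (t • x) := by
  ext x
  have h1 : DifferentiableAt ℝ (fun x => f (t • x)) x :=
    ((hf.comp (contDiff_const_smul t)).differentiable (by simp)) x
  simp only [partialDeriv]
  rw [fderiv_const_mul h1, fderiv_comp_smul]
  simp [mul_assoc]

lemma partialDeriv_coe_schwartz (f : 𝓢(EuclideanSpace ℝ (Fin n), ℝ)) (i : Fin n) :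
    partialDeriv i f = ∂_{EuclideanSpace.single i (1 : ℝ)} f := rfl

end partialDeriv

/-- A sequence of smooth functions all of whose derivatives decay like `2⁻ᵐ`, with an explicit
constant for the functions themselves. -/
structure GeometricallySmall {E : Type*} [NormedAddCommGroup E] [NormedSpace ℝ E]
    (κ : ℕ → E → ℝ) (C : ℝ) : Prop where
  contDiff : ∀ m, ContDiff ℝ ∞ (κ m)
  norm_iteratedFDeriv_le : ∀ k : ℕ, ∃ D : ℝ, ∀ m z, ‖iteratedFDeriv ℝ k (κ m) z‖ ≤ D * (1 / 2) ^ m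
  abs_le : ∀ m z, |κ m z| ≤ C * (1 / 2) ^ m

namespace GeometricallySmall

variable {E : Type*} [NormedAddCommGroup E] [NormedSpace ℝ E] {κ κ' : ℕ → E → ℝ} {C C' : ℝ}

lemma add (h : GeometricallySmall κ C) (h' : GeometricallySmall κ' C') :
    GeometricallySmall (fun m z => κ m z + κ' m z) (C + C') where
  contDiff m := (h.contDiff m).add (h'.contDiff m)
  norm_iteratedFDeriv_le k := by
    obtain ⟨D, hD⟩ := h.norm_iteratedFDeriv_le k
    obtain ⟨D', hD'⟩ := h'.norm_iteratedFDeriv_le k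
    refine ⟨D + D', fun m z => ?_⟩
    have := iteratedFDeriv_add_apply (x := z) (i := k)
      ((h.contDiff m).of_le (by exact_mod_cast le_top)).contDiffAt
      ((h'.contDiff m).of_le (by exact_mod_cast le_top)).contDiffAt
    change ‖iteratedFDeriv ℝ k (κ m + κ' m) z‖ ≤ _
    rw [this, add_mul]
    exact (norm_add_le _ _).trans (add_le_add (hD m z) (hD' m z))
  abs_le m z := by
    rw [add_mul]
    exact (abs_add_le _ _).trans (add_le_add (h.abs_le m z) (h'.abs_le m z))

lemma const_mul (h : GeometricallySmall κ C) (a : ℝ) :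
    GeometricallySmall (fun m z => a * κ m z) (|a| * C) where
  contDiff m := contDiff_const.mul (h.contDiff m)
  norm_iteratedFDeriv_le k := by
    obtain ⟨D, hD⟩ := h.norm_iteratedFDeriv_le k
    refine ⟨|a| * D, fun m z => ?_⟩
    have := iteratedFDeriv_const_smul_apply (x := z) (i := k) (a := a)
      ((h.contDiff m).of_le (by exact_mod_cast le_top)).contDiffAt
    change ‖iteratedFDeriv ℝ k (a • κ m) z‖ ≤ _
    rw [this, norm_smul, Real.norm_eq_abs, mul_assoc]
    exact mul_le_mul_of_nonneg_left (hD m z) (abs_nonneg a)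
  abs_le m z := by
    rw [abs_mul, mul_assoc]
    exact mul_le_mul_of_nonneg_left (h.abs_le m z) (abs_nonneg a)

lemma mono (h : GeometricallySmall κ C) (hC : C ≤ C') : GeometricallySmall κ C' where
  contDiff := h.contDiff
  norm_iteratedFDeriv_le := h.norm_iteratedFDeriv_le
  abs_le m z := (h.abs_le m z).trans (by gcongr)

lemma zero : GeometricallySmall (fun _ (_ : E) => (0 : ℝ)) 0 where
  contDiff _ := contDiff_const
  norm_iteratedFDeriv_le k := ⟨0, fun m z => by
    change ‖iteratedFDeriv ℝ k (0 : E → ℝ) z‖ ≤ _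
    simp⟩
  abs_le _ _ := by simp

lemma sum {ι : Type*} (s : Finset ι) {κ : ι → ℕ → E → ℝ} {C : ι → ℝ}
    (h : ∀ i ∈ s, GeometricallySmall (κ i) (C i)) :
    GeometricallySmall (fun m z => ∑ i ∈ s, κ i m z) (∑ i ∈ s, C i) := by
  classical
  induction s using Finset.induction_on with
  | empty => simpa using zero
  | insert i s hi ih =>
    simp only [Finset.sum_insert hi]
    exact (h i (Finset.mem_insert_self i s)).add
      (ih fun j hj => h j (Finset.mem_insert_of_mem hj))

lemma summable (h : GeometricallySmall κ C) (z : E) : Summable fun m => κ m z :=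
  Summable.of_norm_bounded (summable_geometric_two.mul_left C) fun m => h.abs_le m z

lemma contDiff_tsum (h : GeometricallySmall κ C) : ContDiff ℝ ∞ fun z => ∑' m, κ m z := by
  choose D hD using h.norm_iteratedFDeriv_le
  exact _root_.contDiff_tsum (v := fun k m => D k * (1 / 2) ^ m) (N := ⊤) h.contDiff
    (fun k _ => summable_geometric_two.mul_left (D k)) fun k m z _ => hD k m z

lemma abs_sum_range_le (h : GeometricallySmall κ C) (m : ℕ) (z : E) :
    |∑ k ∈ Finset.range m, κ k z| ≤ 2 * C := by
  have hC : 0 ≤ C := by simpa using (abs_nonneg _).trans (h.abs_le 0 z)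
  refine (Finset.abs_sum_le_sum_abs _ _).trans ?_
  refine (Finset.sum_le_sum fun k _ => h.abs_le k z).trans ?_
  rw [← Finset.mul_sum, mul_comm 2]
  refine mul_le_mul_of_nonneg_left ?_ hC
  exact (summable_geometric_two.sum_le_tsum _ fun _ _ => by positivity).trans_eq
    tsum_geometric_two

end GeometricallySmall

lemma norm_iteratedFDeriv_comp_smul_le {E F : Type*} [NormedAddCommGroup E] [NormedSpace ℝ E]
    [NormedAddCommGroup F] [NormedSpace ℝ F] {f : E → F} (hf : ContDiff ℝ ∞ f) (k : ℕ) {t : ℝ}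
    (ht : 0 ≤ t) (z : E) :
    ‖iteratedFDeriv ℝ k (fun y => f (t • y)) z‖ ≤ ‖iteratedFDeriv ℝ k f (t • z)‖ * t ^ k := by
  have h := ContDiffAt.norm_iteratedFDeriv_comp_add_clm_le (k := k)
    (t • ContinuousLinearMap.id ℝ E) 0 z (f := f) (hf.contDiffAt.of_le (by exact_mod_cast le_top))
  simp only [smul_apply, ContinuousLinearMap.id_apply, zero_add] at h
  refine h.trans ?_
  gcongr
  calc ‖t • ContinuousLinearMap.id ℝ E‖ ≤ ‖t‖ * ‖ContinuousLinearMap.id ℝ E‖ := (norm_smul _ _).le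
    _ ≤ t * 1 := by
      rw [Real.norm_of_nonneg ht]
      exact mul_le_mul_of_nonneg_left ContinuousLinearMap.norm_id_le ht
    _ = t := mul_one t

lemma SchwartzMap.norm_iteratedFDeriv_dyadic_le {E F : Type*} [NormedAddCommGroup E]
    [NormedSpace ℝ E] [NormedAddCommGroup F] [NormedSpace ℝ F] (f : 𝓢(E, F)) (n k l m : ℕ)
    (hl : l ≤ k) {z : E} (hz : 1 / 2 ≤ ‖z‖) :
    ((2 : ℝ) ^ n) ^ m * ‖iteratedFDeriv ℝ l (fun y => f ((2 : ℝ) ^ m • y)) z‖ ≤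
      2 ^ (n + 1 + k) * SchwartzMap.seminorm ℝ (n + 1 + k) l f * (1 / 2) ^ m := by
  have h1 := norm_iteratedFDeriv_comp_smul_le (f.smooth ⊤) l (t := (2 : ℝ) ^ m) (by positivity) z
  have h2 := f.le_seminorm ℝ (n + 1 + k) l ((2 : ℝ) ^ m • z)
  set S := SchwartzMap.seminorm ℝ (n + 1 + k) l f
  set A := ‖iteratedFDeriv ℝ l f ((2 : ℝ) ^ m • z)‖
  have h3 : ((2 : ℝ) ^ m / 2) ^ (n + 1 + k) * A ≤ S := by
    refine le_trans ?_ h2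
    gcongr
    rw [norm_smul, Real.norm_of_nonneg (by positivity)]
    nlinarith [show (0 : ℝ) < 2 ^ m by positivity]
  have h4 : ((2 : ℝ) ^ m) ^ l ≤ ((2 : ℝ) ^ m) ^ k :=
    pow_le_pow_right₀ (one_le_pow₀ one_le_two) hl
  have h5 : ((2 : ℝ) ^ m) ^ (n + 1 + k) * A ≤ 2 ^ (n + 1 + k) * S := by
    rw [div_pow] at h3
    have : (0 : ℝ) < 2 ^ (n + 1 + k) := by positivity
    rw [div_mul_eq_mul_div, div_le_iff₀ this] at h3
    linarith
  calc ((2 : ℝ) ^ n) ^ m * ‖iteratedFDeriv ℝ l (fun y => f ((2 : ℝ) ^ m • y)) z‖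
      ≤ ((2 : ℝ) ^ n) ^ m * (A * ((2 : ℝ) ^ m) ^ k) := by
        gcongr
        exact h1.trans (by gcongr)
    _ = (((2 : ℝ) ^ m) ^ (n + 1 + k) * A) * (1 / 2) ^ m := by
        rw [one_div, inv_pow, pow_add _ (n + 1), pow_succ, ← pow_mul, ← pow_mul, mul_comm n m]
        field_simp
        rw [pow_mul, mul_comm]
    _ ≤ _ := by gcongr

/-- Dilating a Schwartz function concentrates it at the origin, so that cut off away from the
origin it is geometrically small. -/
lemma SchwartzMap.geometricallySmall_dyadic {E : Type*} [NormedAddCommGroup E]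
    [NormedSpace ℝ E] (f : 𝓢(E, ℝ)) {g : E → ℝ} (hg : ContDiff ℝ ∞ g)
    (hgc : HasCompactSupport g) (hg0 : ∀ z, ‖z‖ < 1 / 2 → g z = 0) {B : ℝ} (hB : ∀ z, |g z| ≤ B)
    (n : ℕ) {s : ℝ} (hs0 : 0 ≤ s) (hs1 : s ≤ 1) :
    GeometricallySmall (fun m z => g z * ((2 ^ n * s) ^ m * f ((2 : ℝ) ^ m • z)))
      (B * (2 ^ (n + 1) * SchwartzMap.seminorm ℝ (n + 1) 0 f)) := by
  have hsm : ∀ m, ((2 : ℝ) ^ n * s) ^ m ≤ (2 ^ n) ^ m := fun m => by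
    gcongr
    exact mul_le_of_le_one_right (by positivity) hs1
  have hfm : ∀ m, ContDiff ℝ ∞ fun z => f ((2 : ℝ) ^ m • z) := fun m =>
    (f.smooth ⊤).comp (contDiff_const_smul _)
  have hcd : ∀ m, ContDiff ℝ ∞ fun z => ((2 ^ n * s) ^ m) * f ((2 : ℝ) ^ m • z) := fun m =>
    contDiff_const.mul (hfm m)
  refine ⟨fun m => hg.mul (hcd m), fun k => ?_, fun m z => ?_⟩
  · have hgl : ∀ l, ∃ b, ∀ z, ‖iteratedFDeriv ℝ l g z‖ ≤ b := fun l =>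
      (hgc.iteratedFDeriv (𝕜 := ℝ) l).exists_bound_of_continuous
        (hg.continuous_iteratedFDeriv (by exact_mod_cast le_top))
    choose b hb using hgl
    have hb0 : ∀ l, 0 ≤ b l := fun l => (norm_nonneg _).trans (hb l 0)
    refine ⟨∑ l ∈ Finset.range (k + 1), (k.choose l : ℝ) * b l *
      (2 ^ (n + 1 + k) * SchwartzMap.seminorm ℝ (n + 1 + k) (k - l) f), fun m z => ?_⟩
    refine (norm_iteratedFDeriv_mul_le (N := ∞) hg (hcd m) z (by exact_mod_cast le_top)).trans ?_
    rw [Finset.sum_mul]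
    refine Finset.sum_le_sum fun l _ => ?_
    rw [mul_assoc, mul_assoc, mul_assoc]
    refine mul_le_mul_of_nonneg_left ?_ (by positivity)
    by_cases hz : ‖z‖ < 1 / 2
    · have : iteratedFDeriv ℝ l g z = 0 := by
        have h0 : g =ᶠ[nhds z] fun _ => 0 := by
          filter_upwards [continuous_norm.continuousAt.eventually_lt_const hz] with y hy
          exact hg0 y hy
        rw [(h0.iteratedFDeriv ℝ l).eq_of_nhds]
        change iteratedFDeriv ℝ l (0 : E → ℝ) z = 0
        simp
      rw [this, norm_zero, zero_mul]
      have := hb0 l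
      positivity
    · refine mul_le_mul (hb l z) ?_ (norm_nonneg _) (hb0 l)
      have := iteratedFDeriv_const_smul_apply (x := z) (i := k - l) (a := (2 ^ n * s) ^ m)
        (contDiff_infty.1 (hfm m) _).contDiffAt
      change ‖iteratedFDeriv ℝ (k - l) (((2 ^ n * s) ^ m) • fun z => f ((2 : ℝ) ^ m • z)) z‖ ≤ _
      rw [this, norm_smul, Real.norm_of_nonneg (by positivity)]
      refine le_trans ?_ (f.norm_iteratedFDeriv_dyadic_le n k (k - l) m (Nat.sub_le _ _)
        (not_lt.1 hz))
      exact mul_le_mul_of_nonneg_right (hsm m) (norm_nonneg _)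
  · have hB0 : 0 ≤ B := (abs_nonneg _).trans (hB 0)
    by_cases hz : ‖z‖ < 1 / 2
    · rw [hg0 z hz]
      simp only [zero_mul, abs_zero]
      positivity
    · rw [abs_mul, mul_assoc]
      refine mul_le_mul (hB z) ?_ (abs_nonneg _) hB0
      rw [abs_mul, abs_of_nonneg (by positivity)]
      have := f.norm_iteratedFDeriv_dyadic_le n 0 0 m le_rfl (not_lt.1 hz)
      rw [norm_iteratedFDeriv_zero, add_zero, Real.norm_eq_abs] at this
      exact (mul_le_mul_of_nonneg_right (hsm m) (abs_nonneg _)).trans this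

lemma SchwartzMap.seminorm_lineDerivOp_single_le {n : ℕ} (f : 𝓢(EuclideanSpace ℝ (Fin n), ℝ))
    (k : ℕ) (i : Fin n) :
    SchwartzMap.seminorm ℝ k 0 (∂_{EuclideanSpace.single i (1 : ℝ)} f) ≤
      SchwartzMap.seminorm ℝ k 1 f := by
  refine SchwartzMap.seminorm_le_bound ℝ k 0 _ (apply_nonneg _ _) fun x => ?_
  refine le_trans ?_ (f.le_seminorm ℝ k 1 x)
  rw [norm_iteratedFDeriv_zero, norm_iteratedFDeriv_one]
  gcongr
  change ‖fderiv ℝ f x (EuclideanSpace.single i (1 : ℝ))‖ ≤ _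
  simpa using (fderiv ℝ f x).le_opNorm (EuclideanSpace.single i (1 : ℝ))

lemma partialDeriv_eq_zero_of_eventuallyEq_const {n : ℕ} {f : EuclideanSpace ℝ (Fin n) → ℝ}
    {z : EuclideanSpace ℝ (Fin n)} {a : ℝ} (h : f =ᶠ[nhds z] fun _ => a) (i : Fin n) :
    partialDeriv i f z = 0 := by
  simp [partialDeriv, h.fderiv_eq]

/-- The error terms produced by cutting off a dilated Schwartz function. -/
noncomputable def cutoffError {n : ℕ} (η : EuclideanSpace ℝ (Fin n) → ℝ)
    (f : 𝓢(EuclideanSpace ℝ (Fin n), ℝ)) (i j : Fin n) (m : ℕ) (z : EuclideanSpace ℝ (Fin n)) : ℝ :=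
  partialDeriv i η z * ((2 ^ n * (1 / 2)) ^ m * partialDeriv j f ((2 : ℝ) ^ m • z)) +
    partialDeriv j η z * ((2 ^ n * (1 / 2)) ^ m * partialDeriv i f ((2 : ℝ) ^ m • z)) +
    partialDeriv j (partialDeriv i η) z * ((2 ^ n * (1 / 4)) ^ m * f ((2 : ℝ) ^ m • z))

lemma partialDeriv_partialDeriv_cutoff_mul_dyadic {n : ℕ} {η : EuclideanSpace ℝ (Fin n) → ℝ}
    (hη : ContDiff ℝ ∞ η) (f : 𝓢(EuclideanSpace ℝ (Fin n), ℝ)) (i j : Fin n) (m : ℕ)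
    (z : EuclideanSpace ℝ (Fin n)) :
    partialDeriv j (partialDeriv i fun z => η z * ((2 ^ n * (1 / 4)) ^ m * f ((2 : ℝ) ^ m • z))) z =
      η z * ((2 ^ n) ^ m * partialDeriv j (partialDeriv i f) ((2 : ℝ) ^ m • z)) +
        cutoffError η f i j m z := by
  have hf : ContDiff ℝ ∞ f := f.smooth ⊤
  have hg : ContDiff ℝ ∞ fun z => (2 ^ n * (1 / 4)) ^ m * f ((2 : ℝ) ^ m • z) :=
    contDiff_const.mul (hf.comp (contDiff_const_smul _))
  have h1 : ((2 : ℝ) ^ n * (1 / 4)) ^ m * 2 ^ m = (2 ^ n * (1 / 2)) ^ m := by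
    rw [← mul_pow]; ring
  have h2 : ((2 : ℝ) ^ n * (1 / 2)) ^ m * 2 ^ m = (2 ^ n) ^ m := by
    rw [← mul_pow]; ring
  rw [partialDeriv_partialDeriv_mul hη hg]
  simp only [partialDeriv_const_mul_comp_smul hf, h1,
    partialDeriv_const_mul_comp_smul (hf.partialDeriv i), h2]
  rfl

lemma exists_geometricallySmall_cutoffError {n : ℕ} {η : EuclideanSpace ℝ (Fin n) → ℝ}
    (hη : ContDiff ℝ ∞ η) (hηc : HasCompactSupport η) (hη1 : ∀ z, ‖z‖ < 1 / 2 → η z = 1)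
    (i j : Fin n) : ∃ B : ℝ, 0 ≤ B ∧ ∀ (f : 𝓢(EuclideanSpace ℝ (Fin n), ℝ)) (C : ℝ),
      SchwartzMap.seminorm ℝ (n + 1) 0 f ≤ C → SchwartzMap.seminorm ℝ (n + 1) 1 f ≤ C →
      GeometricallySmall (cutoffError η f i j) (B * C) := by
  have hev : ∀ z, ‖z‖ < 1 / 2 → η =ᶠ[nhds z] fun _ => 1 := fun z hz => by
    filter_upwards [continuous_norm.continuousAt.eventually_lt_const hz] with y hy
    exact hη1 y hy
  have hc1 : ∀ k, HasCompactSupport (partialDeriv k η) := fun k =>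
    hηc.of_isClosed_subset (isClosed_tsupport _) (tsupport_partialDeriv_subset k)
  have hc2 : HasCompactSupport (partialDeriv j (partialDeriv i η)) :=
    (hc1 i).of_isClosed_subset (isClosed_tsupport _) (tsupport_partialDeriv_subset j)
  have h01 : ∀ k z, ‖z‖ < 1 / 2 → partialDeriv k η z = 0 := fun k z hz =>
    partialDeriv_eq_zero_of_eventuallyEq_const (hev z hz) k
  have h02 : ∀ z, ‖z‖ < 1 / 2 → partialDeriv j (partialDeriv i η) z = 0 := fun z hz => by
    refine partialDeriv_eq_zero_of_eventuallyEq_const (a := 0) ?_ j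
    filter_upwards [continuous_norm.continuousAt.eventually_lt_const hz] with y hy
    exact h01 i y hy
  have hd1 := fun k => hη.partialDeriv k
  have hd2 := (hη.partialDeriv i).partialDeriv j
  choose b hb using fun k => (hc1 k).exists_bound_of_continuous (hd1 k).continuous
  obtain ⟨b', hb'⟩ := hc2.exists_bound_of_continuous hd2.continuous
  have hb0 : ∀ k, 0 ≤ b k := fun k => (norm_nonneg _).trans (hb k 0)
  have hb0' : 0 ≤ b' := (norm_nonneg _).trans (hb' 0)
  refine ⟨(b i + b j + b') * 2 ^ (n + 1), by have := hb0 i; have := hb0 j; positivity,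
    fun f C h0 h1 => ?_⟩
  have key := (((∂_{EuclideanSpace.single j (1 : ℝ)} f).geometricallySmall_dyadic (hd1 i) (hc1 i)
    (h01 i) (hb i) n (s := 1 / 2) (by norm_num) (by norm_num)).add
    ((∂_{EuclideanSpace.single i (1 : ℝ)} f).geometricallySmall_dyadic (hd1 j) (hc1 j)
    (h01 j) (hb j) n (s := 1 / 2) (by norm_num) (by norm_num))).add
    (f.geometricallySmall_dyadic hd2 hc2 h02 hb' n (s := 1 / 4) (by norm_num) (by norm_num))
  refine key.mono ?_
  rw [add_mul, add_mul, add_mul, add_mul, mul_assoc, mul_assoc, mul_assoc]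
  have hi := (f.seminorm_lineDerivOp_single_le (n + 1) i).trans h1
  have hj := (f.seminorm_lineDerivOp_single_le (n + 1) j).trans h1
  have := hb0 i
  have := hb0 j
  gcongr

lemma cutoffError_eq_zero {n : ℕ} {η : EuclideanSpace ℝ (Fin n) → ℝ}
    (f : 𝓢(EuclideanSpace ℝ (Fin n), ℝ)) (i j : Fin n) (m : ℕ) {z : EuclideanSpace ℝ (Fin n)}
    (hz : z ∉ tsupport η) : cutoffError η f i j m z = 0 := by
  have h1 : ∀ k, z ∉ tsupport (partialDeriv k η) := fun k h =>
    hz (tsupport_partialDeriv_subset k h)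
  have h2 : z ∉ tsupport (partialDeriv j (partialDeriv i η)) := fun h =>
    h1 i (tsupport_partialDeriv_subset j h)
  simp [cutoffError, image_eq_zero_of_notMem_tsupport (h1 i),
    image_eq_zero_of_notMem_tsupport (h1 j), image_eq_zero_of_notMem_tsupport h2]

/-- The dyadic dilation `2ⁿᵐ X(2ᵐ z)`, which preserves the integral. -/
noncomputable def dyadicDilation {n : ℕ} (X : EuclideanSpace ℝ (Fin n) → ℝ) (m : ℕ)
    (z : EuclideanSpace ℝ (Fin n)) : ℝ :=
  (2 ^ n) ^ m * X ((2 : ℝ) ^ m • z)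

/-- A compactly supported parametrix at every dyadic scale, with geometrically small errors whose
size is uniform in the coefficients. -/
theorem exists_truncated_parametrix (n N : ℕ) {ℓ : ℝ} (L : ℝ) (hℓ : 0 < ℓ) :
    ∃ (X : 𝓢(EuclideanSpace ℝ (Fin n), ℝ)) (η : EuclideanSpace ℝ (Fin n) → ℝ) (M : ℝ),
      ∫ z, X z = 1 ∧ ContDiff ℝ ∞ η ∧ η 0 = 1 ∧ (∀ z, |η z| ≤ 1) ∧ tsupport η ⊆ closedBall 0 1 ∧
      ∀ Q : Fin n → Fin n → Fin N → Fin N → ℝ, (∀ i j a b, |Q i j a b| ≤ L) →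
        LegendreHadamard ℓ Q →
        ∃ (κ : Fin N → Fin N → ℕ → EuclideanSpace ℝ (Fin n) → ℝ)
          (φ : ℕ → Fin N → Fin N → EuclideanSpace ℝ (Fin n) → ℝ),
          (∀ a c, GeometricallySmall (κ a c) M) ∧
          (∀ a c m, ∀ z ∉ closedBall 0 1, κ a c m z = 0) ∧
          (∀ m b c, ContDiff ℝ ∞ (φ m b c) ∧ tsupport (φ m b c) ⊆ closedBall 0 1) ∧
          ∀ a c m z, ∑ i, ∑ j, ∑ b, Q i j a b * partialDeriv j (partialDeriv i (φ m b c)) z =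
            (if a = c then η z * dyadicDilation X (m + 1) z - η z * dyadicDilation X m z else 0) -
              κ a c m z := by
  obtain ⟨X, C, hX, hP⟩ := exists_dyadic_parametrix n N L hℓ
  let η : ContDiffBump (0 : EuclideanSpace ℝ (Fin n)) := ⟨1 / 2, 1, by norm_num, by norm_num⟩
  have hη : ContDiff ℝ ∞ η := η.contDiff
  choose B hB0 hB using exists_geometricallySmall_cutoffError hη η.hasCompactSupport
    fun z hz => η.one_of_mem_closedBall (mem_closedBall_zero_iff.2 hz.le)
  have hsupp : tsupport η ⊆ closedBall 0 1 := η.tsupport_eq.subset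
  refine ⟨X, η, ∑ i, ∑ j, ∑ _b : Fin N, |L| * (B i j * |C|), hX, hη,
    η.one_of_mem_closedBall (mem_closedBall_self η.rIn_pos.le), fun z => ?_, hsupp,
    fun Q hQL hQ => ?_⟩
  · rw [abs_of_nonneg η.nonneg]
    exact η.le_one
  obtain ⟨P, hPX, hPC⟩ := hP Q hQL hQ
  refine ⟨fun a c m z => ∑ i, ∑ j, ∑ b, -Q i j a b * cutoffError η (P b c) i j m z,
    fun m b c z => η z * ((2 ^ n * (1 / 4)) ^ m * P b c ((2 : ℝ) ^ m • z)),
    fun a c => ?_, fun a c m z hz => ?_, fun m b c => ⟨?_, ?_⟩, fun a c m z => ?_⟩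
  · refine (GeometricallySmall.sum _ fun i _ => GeometricallySmall.sum _ fun j _ =>
      GeometricallySmall.sum _ fun b _ => ((hB i j (P b c) |C| ((hPC b c).1.trans (le_abs_self C))
        ((hPC b c).2.trans (le_abs_self C))).const_mul (-Q i j a b))).mono ?_
    refine Finset.sum_le_sum fun i _ => Finset.sum_le_sum fun j _ => Finset.sum_le_sum fun b _ => ?_
    have := hB0 i j
    refine mul_le_mul_of_nonneg_right ?_ (by positivity)
    rw [abs_neg]
    exact (hQL i j a b).trans (le_abs_self L)
  · simp [cutoffError_eq_zero _ _ _ m (fun h => hz (hsupp h))]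
  · exact hη.mul (contDiff_const.mul (((P b c).smooth ⊤).comp (contDiff_const_smul _)))
  · exact (tsupport_mul_subset_left (f := η)).trans hsupp
  · simp only [partialDeriv_partialDeriv_cutoff_mul_dyadic hη, mul_add, Finset.sum_add_distrib,
      neg_mul, Finset.sum_neg_distrib, sub_neg_eq_add]
    congr 1
    have h := hPX a c ((2 : ℝ) ^ m • z)
    calc _ = η z * (2 ^ n) ^ m * ∑ i, ∑ j, ∑ b, Q i j a b *
          (∂_{EuclideanSpace.single j (1 : ℝ)} (∂_{EuclideanSpace.single i (1 : ℝ)} (P b c)))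
            ((2 : ℝ) ^ m • z) := by
          simp only [Finset.mul_sum]
          refine Finset.sum_congr rfl fun i _ => Finset.sum_congr rfl fun j _ =>
            Finset.sum_congr rfl fun b _ => ?_
          simp only [partialDeriv_coe_schwartz]
          ring
      _ = _ := by
          rw [h]
          split_ifs
          · rw [smul_smul, ← pow_succ']
            simp only [dyadicDilation]
            ring
          · ring

section ApproximateIdentity

open Filter Topology

variable {n : ℕ}

lemma tendsto_integral_mul_dyadicDilation (X : 𝓢(EuclideanSpace ℝ (Fin n), ℝ))
    (hX : ∫ z, X z = 1) {η : EuclideanSpace ℝ (Fin n) → ℝ} (hη : Continuous η) (hη0 : η 0 = 1)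
    (hη1 : ∀ z, |η z| ≤ 1) {r : ℝ} (hr : 0 < r) {g : EuclideanSpace ℝ (Fin n) → ℝ}
    (hg : Continuous g) (hgc : HasCompactSupport g) :
    (∃ B, ∀ m y, |∫ x, g x *
      ((r ^ n)⁻¹ * (η (r⁻¹ • (y - x)) * dyadicDilation X m (r⁻¹ • (y - x))))| ≤ B) ∧
    ∀ y, Tendsto (fun m => ∫ x, g x *
      ((r ^ n)⁻¹ * (η (r⁻¹ • (y - x)) * dyadicDilation X m (r⁻¹ • (y - x))))) atTop (𝓝 (g y)) := by
  have key : ∀ m y, ∫ x, g x *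
      ((r ^ n)⁻¹ * (η (r⁻¹ • (y - x)) * dyadicDilation X m (r⁻¹ • (y - x)))) =
      ∫ z, g (y - (r * (1 / 2) ^ m) • z) * (η (((1 : ℝ) / 2) ^ m • z) * X z) := by
    intro m y
    have hs : 0 < r * (1 / 2 : ℝ) ^ m := by positivity
    let H : EuclideanSpace ℝ (Fin n) → ℝ := fun u =>
      g (y - u) * (η (r⁻¹ • u) * X ((r * (1 / 2 : ℝ) ^ m)⁻¹ • u))
    have h1 : ∀ z, g (y - (r * (1 / 2) ^ m) • z) * (η (((1 : ℝ) / 2) ^ m • z) * X z) =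
        H ((r * (1 / 2) ^ m) • z) := by
      intro z
      simp only [H, smul_smul]
      rw [inv_mul_cancel₀ hs.ne', one_smul, inv_mul_cancel_left₀ hr.ne']
    simp_rw [h1]
    rw [Measure.integral_comp_smul_of_nonneg _ _ _ (hR := hs.le), finrank_euclideanSpace_fin,
      smul_eq_mul, ← integral_const_mul]
    rw [← integral_sub_left_eq_self _ volume y]
    refine integral_congr_ae (.of_forall fun x => ?_)
    have h2 : (2 : ℝ) ^ m • r⁻¹ • x = (r * (1 / 2 : ℝ) ^ m)⁻¹ • x := by
      rw [smul_smul, mul_inv, one_div, inv_pow, inv_inv, mul_comm]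
    have h3 : ((r * (1 / 2 : ℝ) ^ m) ^ n)⁻¹ = (r ^ n)⁻¹ * (2 ^ n) ^ m := by
      rw [mul_pow, mul_inv, one_div, inv_pow, inv_pow, inv_inv, ← pow_mul, ← pow_mul, mul_comm m]
    simp only [H, dyadicDilation, h2, h3, sub_sub_cancel]
    ring
  obtain ⟨B, hB⟩ := hgc.exists_bound_of_continuous hg
  have hbd : ∀ m y z, ‖g (y - (r * (1 / 2) ^ m) • z) * (η (((1 : ℝ) / 2) ^ m • z) * X z)‖ ≤
      B * ‖X z‖ := by
    intro m y z
    have hB0 : 0 ≤ B := (norm_nonneg _).trans (hB 0)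
    rw [norm_mul, norm_mul]
    refine mul_le_mul (hB _) ?_ (by positivity) hB0
    exact mul_le_of_le_one_left (norm_nonneg _) (hη1 _)
  have hvint : Integrable fun z => B * ‖X z‖ := (X.integrable.norm).const_mul B
  refine ⟨⟨∫ z, B * ‖X z‖, fun m y => ?_⟩, fun y => ?_⟩
  · rw [key]
    exact norm_integral_le_of_norm_le hvint (.of_forall (hbd m y))
  · simp_rw [key]
    have hgy : g y = ∫ z, g y * (1 * X z) := by
      rw [integral_const_mul]
      simp [hX]
    rw [hgy]
    have hp : Tendsto (fun m : ℕ => (1 / 2 : ℝ) ^ m) atTop (𝓝 0) :=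
      tendsto_pow_atTop_nhds_zero_of_lt_one (by norm_num) (by norm_num)
    refine tendsto_integral_of_dominated_convergence _ (fun m => ?_) hvint
      (fun m => .of_forall (hbd m y)) (.of_forall fun z => ?_)
    · have := X.continuous
      exact Continuous.aestronglyMeasurable (by fun_prop)
    · refine Tendsto.mul ?_ (Tendsto.mul ?_ tendsto_const_nhds)
      · refine (hg.tendsto y).comp ?_
        have := tendsto_const_nhds (x := y) |>.sub ((hp.const_mul r).smul_const z)
        simpa using this
      · have h0 : Tendsto (fun m : ℕ => ((1 : ℝ) / 2) ^ m • z) atTop (𝓝 0) := by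
          simpa using hp.smul_const z
        have := (hη.tendsto 0).comp h0
        rwa [hη0] at this

lemma ae_eq_of_tendsto_integral_kernel {f h : EuclideanSpace ℝ (Fin n) → ℝ}
    {U : Set (EuclideanSpace ℝ (Fin n))} (hU : IsOpen U) (hf : Integrable f) (hh : Continuous h)
    {k : ℕ → EuclideanSpace ℝ (Fin n) → ℝ} (hk : ∀ m, Continuous (k m))
    (hkb : ∀ m, ∃ b, ∀ z, |k m z| ≤ b)
    (happrox : ∀ g : EuclideanSpace ℝ (Fin n) → ℝ, Continuous g → HasCompactSupport g →
      (∃ B, ∀ m y, |∫ x, g x * k m (y - x)| ≤ B) ∧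
        ∀ y, Tendsto (fun m => ∫ x, g x * k m (y - x)) atTop (𝓝 (g y)))
    {D : ℝ} (hD : ∀ m, ∀ x ∈ U, |∫ y, f y * k m (y - x)| ≤ D)
    (hlim : ∀ x ∈ U, Tendsto (fun m => ∫ y, f y * k m (y - x)) atTop (𝓝 (h x))) :
    ∀ᵐ x, x ∈ U → f x = h x := by
  have hloc : LocallyIntegrableOn (fun x => f x - h x) U :=
    (hf.locallyIntegrable.sub hh.locallyIntegrable).locallyIntegrableOn U
  have hzero := hU.ae_eq_zero_of_integral_contDiff_smul_eq_zero hloc fun g hg hgc hgU => ?_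
  · filter_upwards [hzero] with x hx hxU
    exact sub_eq_zero.1 (hx hxU)
  have hgi : Integrable g := hg.continuous.integrable_of_hasCompactSupport hgc
  obtain ⟨b, hb⟩ := hgc.exists_bound_of_continuous hg.continuous
  obtain ⟨⟨B, hB⟩, hBlim⟩ := happrox g hg.continuous hgc
  have hprod : ∀ m, Integrable (Function.uncurry fun y x => f y * g x * k m (y - x))
      (volume.prod volume) := by
    intro m
    obtain ⟨bk, hbk⟩ := hkb m
    have := hk m
    exact (hf.mul_prod hgi).mul_bdd (g := fun p : EuclideanSpace ℝ (Fin n) × _ => k m (p.1 - p.2))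
      (Continuous.aestronglyMeasurable (by fun_prop)) (.of_forall fun p => hbk _)
  have hswap : ∀ m, ∫ y, f y * ∫ x, g x * k m (y - x) = ∫ x, g x * ∫ y, f y * k m (y - x) := by
    intro m
    calc _ = ∫ y, ∫ x, f y * g x * k m (y - x) := by
          simp_rw [← integral_const_mul, mul_assoc]
      _ = ∫ x, ∫ y, f y * g x * k m (y - x) := integral_integral_swap (hprod m)
      _ = _ := by
          simp_rw [← integral_const_mul]
          refine integral_congr_ae (.of_forall fun x => integral_congr_ae (.of_forall fun y => ?_))
          ring
  have hlim1 : Tendsto (fun m => ∫ y, f y * ∫ x, g x * k m (y - x)) atTop (𝓝 (∫ y, f y * g y)) := by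
    refine tendsto_integral_of_dominated_convergence (fun y => ‖f y‖ * B) (fun m => ?_)
      (hf.norm.mul_const B) (fun m => .of_forall fun y => ?_)
      (.of_forall fun y => (hBlim y).const_mul _)
    · have := (hprod m).integral_prod_left.aestronglyMeasurable
      simpa only [Function.uncurry_apply_pair, mul_assoc, integral_const_mul] using this
    · rw [norm_mul]
      exact mul_le_mul_of_nonneg_left (hB m y) (norm_nonneg _)
  have hg0 : ∀ x ∉ U, g x = 0 := fun x hx => image_eq_zero_of_notMem_tsupport fun h => hx (hgU h)
  have hlim2 : Tendsto (fun m => ∫ x, g x * ∫ y, f y * k m (y - x)) atTop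
      (𝓝 (∫ y, g y * h y)) := by
    refine tendsto_integral_of_dominated_convergence (fun y => ‖g y‖ * D) (fun m => ?_)
      (hgi.norm.mul_const D) (fun m => .of_forall fun x => ?_)
      (.of_forall fun x => ?_)
    · have := (hprod m).integral_prod_right.aestronglyMeasurable
      simpa only [Function.uncurry_apply_pair, mul_assoc, mul_left_comm (f _) (g _),
        integral_const_mul] using this
    · rw [norm_mul]
      by_cases hx : x ∈ U
      · exact mul_le_mul_of_nonneg_left (hD m x hx) (norm_nonneg _)
      · simp [hg0 x hx]
    · by_cases hx : x ∈ U
      · exact (hlim x hx).const_mul _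
      · simp [hg0 x hx]
  simp_rw [hswap] at hlim1
  have heq := tendsto_nhds_unique hlim1 hlim2
  have hgf : Integrable fun x => g x * f x :=
    hf.bdd_mul hg.continuous.aestronglyMeasurable (.of_forall hb)
  have hgh : Integrable fun x => g x * h x :=
    (hg.continuous.mul hh).integrable_of_hasCompactSupport hgc.mul_right
  simp_rw [smul_eq_mul, mul_sub]
  rw [integral_sub hgf hgh, ← heq, sub_eq_zero]
  simp_rw [mul_comm]

end ApproximateIdentity

/-- Very weak solutions of the constant coefficient system `∑ Q^{ij}_{ab} D_i D_j v^a = 0`. -/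
def IsVeryWeakSolution {n N : ℕ} (Q : Fin n → Fin n → Fin N → Fin N → ℝ)
    (Ω : Set (EuclideanSpace ℝ (Fin n))) (v : EuclideanSpace ℝ (Fin n) → EuclideanSpace ℝ (Fin N)) :
    Prop :=
  ∀ φ : EuclideanSpace ℝ (Fin n) → EuclideanSpace ℝ (Fin N),
    ContDiff ℝ (⊤ : ℕ∞) φ → HasCompactSupport φ → tsupport φ ⊆ Ω →
    ∫ x in Ω, ∑ i, ∑ j, ∑ a, ∑ b,
      v x a * Q i j a b *
        fderiv ℝ (fun y => fderiv ℝ φ y (EuclideanSpace.single i 1) b) x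
          (EuclideanSpace.single j 1) = 0

lemma partialDeriv_const_mul_comp_smul_sub {n : ℕ} {f : EuclideanSpace ℝ (Fin n) → ℝ}
    (hf : ContDiff ℝ ∞ f) (i : Fin n) (s t : ℝ) (x : EuclideanSpace ℝ (Fin n)) :
    partialDeriv i (fun y => s * f (t • (y - x))) =
      fun y => (s * t) * partialDeriv i f (t • (y - x)) := by
  ext y
  have h := congrFun (partialDeriv_const_mul_comp_smul hf i s t) (y - x)
  rw [← h]
  exact congrArg (· (EuclideanSpace.single i 1))
    (fderiv_comp_sub (𝕜 := ℝ) (f := fun z => s * f (t • z)) x)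

lemma IsVeryWeakSolution.integral_comp_smul_sub_eq_zero {n N : ℕ}
    {Q : Fin n → Fin n → Fin N → Fin N → ℝ} {Ω : Set (EuclideanSpace ℝ (Fin n))}
    {v : EuclideanSpace ℝ (Fin n) → EuclideanSpace ℝ (Fin N)} (h : IsVeryWeakSolution Q Ω v)
    {ψ : Fin N → EuclideanSpace ℝ (Fin n) → ℝ} (hψ : ∀ b, ContDiff ℝ ∞ (ψ b))
    (hψs : ∀ b, tsupport (ψ b) ⊆ closedBall 0 1) {x : EuclideanSpace ℝ (Fin n)} {r : ℝ}
    (hr : 0 < r) (hx : closedBall x r ⊆ Ω) :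
    ∫ y in Ω, ∑ a, v y a * ∑ i, ∑ j, ∑ b,
      Q i j a b * partialDeriv j (partialDeriv i (ψ b)) (r⁻¹ • (y - x)) = 0 := by
  let φ : EuclideanSpace ℝ (Fin n) → EuclideanSpace ℝ (Fin N) := fun y =>
    WithLp.toLp 2 fun b => r ^ 2 * ψ b (r⁻¹ • (y - x))
  have hφ : ContDiff ℝ ∞ φ := by
    refine contDiff_euclidean.2 fun b => ?_
    have : ContDiff ℝ ∞ fun y : EuclideanSpace ℝ (Fin n) => r⁻¹ • (y - x) := by fun_prop
    exact contDiff_const.mul ((hψ b).comp this)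
  have hsub : Function.support φ ⊆ closedBall x r := by
    intro y hy
    by_contra hyr
    refine hy ?_
    ext b
    have : r⁻¹ • (y - x) ∉ tsupport (ψ b) := fun hmem => hyr <| by
      have h1 := mem_closedBall_zero_iff.1 (hψs b hmem)
      rw [norm_smul, Real.norm_of_nonneg (by positivity), inv_mul_le_iff₀ hr, mul_one] at h1
      rwa [mem_closedBall, dist_eq_norm]
    simp [φ, image_eq_zero_of_notMem_tsupport this]
  have hcomp : ∀ i b y, fderiv ℝ φ y (EuclideanSpace.single i 1) b =
      partialDeriv i (fun y => r ^ 2 * ψ b (r⁻¹ • (y - x))) y := by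
    intro i b y
    have h1 := ((EuclideanSpace.proj b : EuclideanSpace ℝ (Fin N) →L[ℝ] ℝ).hasFDerivAt.comp y
      ((hφ.differentiable (by simp)) y).hasFDerivAt).fderiv
    exact (congrArg (· (EuclideanSpace.single i 1)) h1).symm
  have key := h φ hφ (HasCompactSupport.of_support_subset_isCompact (isCompact_closedBall x r) hsub)
    ((closure_minimal hsub isClosed_closedBall).trans hx)
  rw [← key]
  refine integral_congr_ae (.of_forall fun y => ?_)
  have hr2 : r ^ 2 * r⁻¹ * r⁻¹ = 1 := by field_simp
  have h2 : ∀ i j b, fderiv ℝ (fun y => fderiv ℝ φ y (EuclideanSpace.single i 1) b) y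
      (EuclideanSpace.single j 1) = partialDeriv j (partialDeriv i (ψ b)) (r⁻¹ • (y - x)) := by
    intro i j b
    simp_rw [hcomp, partialDeriv_const_mul_comp_smul_sub (hψ b)]
    change partialDeriv j _ y = _
    rw [partialDeriv_const_mul_comp_smul_sub ((hψ b).partialDeriv i)]
    simp [hr2]
  simp only [h2, Finset.mul_sum]
  simp_rw [Finset.sum_comm (s := (Finset.univ : Finset (Fin N)))
    (t := (Finset.univ : Finset (Fin n))),
    mul_assoc]

lemma contDiff_integral_comp_smul_sub {n N : ℕ}
    {k : EuclideanSpace ℝ (Fin n) → EuclideanSpace ℝ (Fin N) →L[ℝ] EuclideanSpace ℝ (Fin N)}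
    (hk : ContDiff ℝ ∞ k) (hk0 : ∀ z ∉ closedBall 0 1, k z = 0)
    {f : EuclideanSpace ℝ (Fin n) → EuclideanSpace ℝ (Fin N)} (hf : LocallyIntegrable f)
    {r : ℝ} (hr : 0 < r) : ContDiff ℝ ∞ fun x => ∫ y, k (r⁻¹ • (y - x)) (f y) := by
  have hg : ContDiff ℝ ∞ fun z => k (-r⁻¹ • z) := hk.comp (contDiff_const_smul _)
  have hgc : HasCompactSupport fun z => k (-r⁻¹ • z) := by
    refine HasCompactSupport.of_support_subset_isCompact (isCompact_closedBall 0 r) fun z hz => ?_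
    by_contra hzr
    refine hz (hk0 _ fun hmem => hzr ?_)
    have h1 := mem_closedBall_zero_iff.1 hmem
    rw [norm_smul, norm_neg, Real.norm_of_nonneg (by positivity), inv_mul_le_iff₀ hr, mul_one] at h1
    exact mem_closedBall_zero_iff.2 h1
  have := hgc.contDiff_convolution_right
    (ContinuousLinearMap.apply ℝ (EuclideanSpace ℝ (Fin N))) (n := ⊤) hf hg
  convert this using 2 with x
  simp only [convolution, ContinuousLinearMap.apply_apply]
  refine integral_congr_ae (.of_forall fun y => ?_)
  simp only [neg_smul, ← smul_neg, neg_sub]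

/-- The rank one operator `u ↦ u_a e_c`. -/
noncomputable def matrixUnit {N : ℕ} (a c : Fin N) :
    EuclideanSpace ℝ (Fin N) →L[ℝ] EuclideanSpace ℝ (Fin N) :=
  (EuclideanSpace.proj a : EuclideanSpace ℝ (Fin N) →L[ℝ] ℝ).smulRight (EuclideanSpace.single c 1)

lemma sum_smul_matrixUnit_apply {N : ℕ} (K : Fin N → Fin N → ℝ) (u : EuclideanSpace ℝ (Fin N))
    (c : Fin N) : (∑ a, ∑ d, K a d • matrixUnit a d) u c = ∑ a, u a * K a c := by
  simp [matrixUnit, sum_apply, Pi.single_apply, mul_comm]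

section Reproducing

open Filter Topology

/-- The kernel identities satisfied by a truncated parametrix give, at every point, the limit of
the dyadic averages of a solution. -/
lemma IsVeryWeakSolution.tendsto_integral_dyadic {n N : ℕ}
    {Q : Fin n → Fin n → Fin N → Fin N → ℝ} {Ω : Set (EuclideanSpace ℝ (Fin n))}
    {v : EuclideanSpace ℝ (Fin n) → EuclideanSpace ℝ (Fin N)} (hv : IsVeryWeakSolution Q Ω v)
    {G : ℕ → EuclideanSpace ℝ (Fin n) → ℝ} (hG : ∀ m, Continuous (G m))
    (hG0 : ∀ m, ∀ z ∉ closedBall 0 1, G m z = 0) {b : ℝ} (hb : ∀ z, |G 0 z| ≤ b)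
    {κ : Fin N → Fin N → ℕ → EuclideanSpace ℝ (Fin n) → ℝ} {M : ℝ}
    (hκ : ∀ a c, GeometricallySmall (κ a c) M)
    (hκ0 : ∀ a c m, ∀ z ∉ closedBall 0 1, κ a c m z = 0)
    {φ : ℕ → Fin N → Fin N → EuclideanSpace ℝ (Fin n) → ℝ}
    (hφ : ∀ m b c, ContDiff ℝ ∞ (φ m b c) ∧ tsupport (φ m b c) ⊆ closedBall 0 1)
    (heq : ∀ a c m z, ∑ i, ∑ j, ∑ b, Q i j a b * partialDeriv j (partialDeriv i (φ m b c)) z =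
      (if a = c then G (m + 1) z - G m z else 0) - κ a c m z)
    {f : EuclideanSpace ℝ (Fin n) → EuclideanSpace ℝ (Fin N)} (hf : Integrable f)
    {x : EuclideanSpace ℝ (Fin n)} {r : ℝ} (hr : 0 < r) (hx : closedBall x r ⊆ Ω)
    (hfv : ∀ y ∈ closedBall x r, f y = v y) (c : Fin N) :
    (∀ m, |∫ y, f y c * G m (r⁻¹ • (y - x))| ≤ ∫ y, ∑ a, |f y a| * (b + 2 * M)) ∧
    Tendsto (fun m => ∫ y, f y c * G m (r⁻¹ • (y - x))) atTop
      (𝓝 (∫ y, ∑ a, f y a *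
        ((if a = c then G 0 (r⁻¹ • (y - x)) else 0) + ∑' m, κ a c m (r⁻¹ • (y - x))))) := by
  have hb0 : 0 ≤ b := (abs_nonneg _).trans (hb 0)
  have hout : ∀ y ∉ closedBall x r, r⁻¹ • (y - x) ∉
      closedBall (0 : EuclideanSpace ℝ (Fin n)) 1 := by
    intro y hy hmem
    have h1 := mem_closedBall_zero_iff.1 hmem
    rw [norm_smul, Real.norm_of_nonneg (by positivity), inv_mul_le_iff₀ hr, mul_one] at h1
    exact hy (by rwa [mem_closedBall, dist_eq_norm])
  have hfa : ∀ a, Integrable fun y => f y a := fun a =>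
    (EuclideanSpace.proj a : EuclideanSpace ℝ (Fin N) →L[ℝ] ℝ).integrable_comp hf
  have hvint : ∀ (a : Fin N) {g : EuclideanSpace ℝ (Fin n) → ℝ} {d : ℝ}, Continuous g →
      (∀ z, |g z| ≤ d) → Integrable fun y => f y a * g (r⁻¹ • (y - x)) := fun a g d hg hd =>
    (hfa a).mul_bdd (Continuous.aestronglyMeasurable (by fun_prop)) (.of_forall fun y => hd _)
  have hGint : ∀ m, Integrable fun y => f y c * G m (r⁻¹ • (y - x)) := fun m => by
    have : HasCompactSupport (G m) := HasCompactSupport.intro (isCompact_closedBall 0 1)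
      fun z hz => hG0 m z hz
    obtain ⟨d, hd⟩ := this.exists_bound_of_continuous (hG m)
    exact hvint c (hG m) hd
  let T : Fin N → ℕ → EuclideanSpace ℝ (Fin n) → ℝ := fun a m z =>
    (if a = c then G 0 z else 0) + ∑ k ∈ Finset.range m, κ a c k z
  have hT : ∀ a m, Continuous (T a m) := fun a m => by
    have h1 : ∀ k, Continuous (κ a c k) := fun k => ((hκ a c).contDiff k).continuous
    have h2 : Continuous fun z => if a = c then G 0 z else 0 := by
      split_ifs
      · exact hG 0
      · exact continuous_const
    exact h2.add (continuous_finsetSum _ fun k _ => h1 k)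
  have hTb : ∀ a m z, |T a m z| ≤ b + 2 * M := fun a m z => by
    refine (abs_add_le _ _).trans (add_le_add ?_ ((hκ a c).abs_sum_range_le m z))
    split_ifs
    · exact hb z
    · simpa using hb0
  have hTint : ∀ m, Integrable fun y => ∑ a, f y a * T a m (r⁻¹ • (y - x)) := fun m =>
    integrable_finsetSum _ fun a _ => hvint a (hT a m) (hTb a m)
  have hκint : ∀ m, Integrable fun y => ∑ a, f y a * κ a c m (r⁻¹ • (y - x)) := fun m =>
    integrable_finsetSum _ fun a _ => hvint a ((hκ a c).contDiff m).continuous ((hκ a c).abs_le m)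
  have hstep : ∀ m, ∫ y, f y c * G (m + 1) (r⁻¹ • (y - x)) =
      (∫ y, f y c * G m (r⁻¹ • (y - x))) + ∫ y, ∑ a, f y a * κ a c m (r⁻¹ • (y - x)) := by
    intro m
    have h0 := hv.integral_comp_smul_sub_eq_zero (fun b => (hφ m b c).1) (fun b => (hφ m b c).2)
      hr hx
    simp_rw [heq] at h0
    rw [setIntegral_eq_integral_of_forall_compl_eq_zero] at h0
    · have hadd : Integrable fun y => f y c * G m (r⁻¹ • (y - x)) +
          ∑ a, f y a * κ a c m (r⁻¹ • (y - x)) := (hGint m).add (hκint m)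
      rw [← integral_add (hGint m) (hκint m), ← sub_eq_zero, ← integral_sub (hGint (m + 1)) hadd,
        ← h0]
      refine integral_congr_ae (.of_forall fun y => ?_)
      by_cases hy : y ∈ closedBall x r
      · simp only [hfv y hy, mul_sub, mul_ite, mul_zero, Finset.sum_sub_distrib,
          Finset.sum_ite_eq', Finset.mem_univ, if_true]
        ring
      · simp [hG0 _ _ (hout y hy), hκ0 _ _ _ _ (hout y hy)]
    · intro y hy
      have hy' : y ∉ closedBall x r := fun h => hy (hx h)
      simp [hG0 _ _ (hout y hy'), hκ0 _ _ _ _ (hout y hy')]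
  have hrep : ∀ m, ∫ y, f y c * G m (r⁻¹ • (y - x)) = ∫ y, ∑ a, f y a * T a m (r⁻¹ • (y - x)) := by
    intro m
    induction m with
    | zero => simp [T]
    | succ m ih =>
      rw [hstep, ih, ← integral_add (hTint m) (hκint m)]
      refine integral_congr_ae (.of_forall fun y => ?_)
      simp only [T, Finset.sum_range_succ, ← Finset.sum_add_distrib]
      refine Finset.sum_congr rfl fun a _ => ?_
      ring
  have hbd : ∀ m y, ‖∑ a, f y a * T a m (r⁻¹ • (y - x))‖ ≤ ∑ a, |f y a| * (b + 2 * M) := by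
    intro m y
    refine (norm_sum_le _ _).trans (Finset.sum_le_sum fun a _ => ?_)
    rw [norm_mul]
    exact mul_le_mul_of_nonneg_left (hTb a m _) (norm_nonneg _)
  have hbint : Integrable fun y => ∑ a, |f y a| * (b + 2 * M) :=
    integrable_finsetSum _ fun a _ => (hfa a).abs.mul_const _
  refine ⟨fun m => ?_, ?_⟩
  · rw [hrep]
    exact norm_integral_le_of_norm_le hbint (.of_forall (hbd m))
  · simp_rw [hrep]
    refine tendsto_integral_of_dominated_convergence _ (fun m => (hTint m).aestronglyMeasurable)
      hbint (fun m => .of_forall (hbd m)) (.of_forall fun y => ?_)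
    refine tendsto_finsetSum _ fun a _ => Tendsto.const_mul _ (Tendsto.const_add _ ?_)
    exact ((hκ a c).summable _).hasSum.tendsto_sum_nat

/-- Solutions are reproduced locally by a smooth compactly supported kernel whose size is controlled
by the ellipticity constants alone. -/
theorem exists_reproducing_kernel (n N : ℕ) {ℓ : ℝ} (L : ℝ) (hℓ : 0 < ℓ) :
    ∃ M : ℝ, ∀ Q : Fin n → Fin n → Fin N → Fin N → ℝ, (∀ i j a b, |Q i j a b| ≤ L) →
      LegendreHadamard ℓ Q →
      ∃ k : EuclideanSpace ℝ (Fin n) → EuclideanSpace ℝ (Fin N) →L[ℝ] EuclideanSpace ℝ (Fin N),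
        ContDiff ℝ ∞ k ∧ (∀ z ∉ closedBall 0 1, k z = 0) ∧ (∀ z, ‖k z‖ ≤ M) ∧
        ∀ (Ω : Set (EuclideanSpace ℝ (Fin n)))
          (v : EuclideanSpace ℝ (Fin n) → EuclideanSpace ℝ (Fin N)),
          LocallyIntegrableOn v Ω → IsVeryWeakSolution Q Ω v →
          ∀ (x₀ : EuclideanSpace ℝ (Fin n)) (r δ : ℝ), 0 < r → 0 < δ →
            closedBall x₀ (r + δ) ⊆ Ω →
            ∀ᵐ x, x ∈ ball x₀ δ → v x =
              (r ^ n)⁻¹ • ∫ y, k (r⁻¹ • (y - x)) ((closedBall x₀ (r + δ)).indicator v y) := by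
  obtain ⟨X, η, M, hX, hη, hη0, hη1, hηs, h⟩ := exists_truncated_parametrix n N L hℓ
  set b := SchwartzMap.seminorm ℝ 0 0 X
  let G : ℕ → EuclideanSpace ℝ (Fin n) → ℝ := fun m z => η z * dyadicDilation X m z
  have hGs : ∀ m, ContDiff ℝ ∞ (G m) := fun m =>
    hη.mul (contDiff_const.mul ((X.smooth ⊤).comp (contDiff_const_smul _)))
  have hG0 : ∀ m, ∀ z ∉ closedBall 0 1, G m z = 0 := fun m z hz => by
    simp [G, image_eq_zero_of_notMem_tsupport fun h => hz (hηs h)]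
  have hGb : ∀ z, |G 0 z| ≤ b := fun z => by
    simp only [G, dyadicDilation, pow_zero, one_mul, one_smul, abs_mul]
    exact (mul_le_of_le_one_left (abs_nonneg _) (hη1 z)).trans (X.norm_le_seminorm ℝ z)
  have hb0 : 0 ≤ b := apply_nonneg _ _
  refine ⟨∑ a : Fin N, ∑ c, (b + 2 * M) * ‖matrixUnit a c‖, fun Q hQL hQ => ?_⟩
  obtain ⟨κ, φ, hκ, hκ0, hφ, heq⟩ := h Q hQL hQ
  let K : Fin N → Fin N → EuclideanSpace ℝ (Fin n) → ℝ := fun a c z =>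
    (if a = c then G 0 z else 0) + ∑' m, κ a c m z
  have hK : ∀ a c, ContDiff ℝ ∞ (K a c) := fun a c => by
    refine ContDiff.add ?_ (hκ a c).contDiff_tsum
    split_ifs
    · exact hGs 0
    · exact contDiff_const
  have hKb : ∀ a c z, |K a c z| ≤ b + 2 * M := fun a c z => by
    refine (abs_add_le _ _).trans (add_le_add ?_ ?_)
    · split_ifs
      · exact hGb z
      · simpa using hb0
    · exact le_of_tendsto ((hκ a c).summable z).hasSum.tendsto_sum_nat.abs
        (.of_forall fun m => (hκ a c).abs_sum_range_le m z)
  let k : EuclideanSpace ℝ (Fin n) → EuclideanSpace ℝ (Fin N) →L[ℝ] EuclideanSpace ℝ (Fin N) :=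
    fun z => ∑ a, ∑ c, K a c z • matrixUnit a c
  have hk : ContDiff ℝ ∞ k :=
    ContDiff.sum fun a _ => ContDiff.sum fun c _ => (hK a c).smul contDiff_const
  have hk0 : ∀ z ∉ closedBall 0 1, k z = 0 := fun z hz => by
    have hκz : ∀ a c m, κ a c m z = 0 := fun a c m => hκ0 a c m z hz
    refine Finset.sum_eq_zero fun a _ => Finset.sum_eq_zero fun c _ => ?_
    have hKz : K a c z = 0 := by simp [K, hG0 0 z hz, hκz]
    rw [hKz]
    exact zero_smul ℝ (matrixUnit a c)
  have hkM : ∀ z, ‖k z‖ ≤ ∑ a : Fin N, ∑ c, (b + 2 * M) * ‖matrixUnit a c‖ := fun z => by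
    refine (norm_sum_le _ _).trans (Finset.sum_le_sum fun a _ => (norm_sum_le _ _).trans
      (Finset.sum_le_sum fun c _ => ?_))
    rw [norm_smul]
    exact mul_le_mul_of_nonneg_right (hKb a c z) (norm_nonneg _)
  refine ⟨k, hk, hk0, hkM, fun Ω v hvi hv x₀ r δ hr hδ hsub => ?_⟩
  set S := closedBall x₀ (r + δ)
  set f := S.indicator v
  have hf : Integrable f := (integrable_indicator_iff measurableSet_closedBall).2
    (hvi.integrableOn_compact_subset hsub (isCompact_closedBall _ _))
  have hfS : ∀ x ∈ ball x₀ δ, closedBall x r ⊆ S := fun x hx =>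
    closedBall_subset_closedBall' (by have := mem_ball.1 hx; linarith)
  have hw := contDiff_integral_comp_smul_sub hk hk0 hf.locallyIntegrable hr
  have hkc := hk.continuous
  have hcomp : ∀ x c, ((r ^ n)⁻¹ • ∫ y, k (r⁻¹ • (y - x)) (f y)) c =
      (r ^ n)⁻¹ * ∫ y, ∑ a, f y a * K a c (r⁻¹ • (y - x)) := by
    intro x c
    have hki : Integrable fun y => k (r⁻¹ • (y - x)) (f y) := by
      refine (hf.norm.const_mul (∑ a : Fin N, ∑ c, (b + 2 * M) * ‖matrixUnit a c‖)).mono' ?_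
        (.of_forall fun y => ?_)
      · have h1 : AEStronglyMeasurable (fun y => k (r⁻¹ • (y - x))) volume :=
          Continuous.aestronglyMeasurable (by fun_prop)
        exact (ContinuousLinearMap.id ℝ _).aestronglyMeasurable_comp₂ h1 hf.aestronglyMeasurable
      · exact (ContinuousLinearMap.le_opNorm _ _).trans
          (mul_le_mul_of_nonneg_right (hkM _) (norm_nonneg _))
    have h1 := (EuclideanSpace.proj c : EuclideanSpace ℝ (Fin N) →L[ℝ] ℝ).integral_comp_comm hki
    rw [PiLp.smul_apply, smul_eq_mul]
    refine congrArg _ (h1.symm.trans (integral_congr_ae (.of_forall fun y => ?_)))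
    exact sum_smul_matrixUnit_apply (fun a d => K a d (r⁻¹ • (y - x))) (f y) c
  have hae : ∀ c, ∀ᵐ x, x ∈ ball x₀ δ →
      f x c = ((r ^ n)⁻¹ • ∫ y, k (r⁻¹ • (y - x)) (f y)) c := by
    intro c
    have hlim : ∀ x ∈ ball x₀ δ, _ := fun x hx =>
      hv.tendsto_integral_dyadic (fun m => (hGs m).continuous) hG0 hGb hκ hκ0 hφ heq hf hr
        ((hfS x hx).trans hsub) (fun y hy => Set.indicator_of_mem (hfS x hx hy) v) c
    have hrew : ∀ m x, ∫ y, f y c * ((r ^ n)⁻¹ * (η (r⁻¹ • (y - x)) *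
        dyadicDilation X m (r⁻¹ • (y - x)))) =
        (r ^ n)⁻¹ * ∫ y, f y c * G m (r⁻¹ • (y - x)) := by
      intro m x
      rw [← integral_const_mul]
      simp only [G]
      refine integral_congr_ae (.of_forall fun y => ?_)
      ring
    refine ae_eq_of_tendsto_integral_kernel (D := (r ^ n)⁻¹ * ∫ y, ∑ a, |f y a| * (b + 2 * M))
      (k := fun m z => (r ^ n)⁻¹ * (η (r⁻¹ • z) * dyadicDilation X m (r⁻¹ • z))) isOpen_ball
      ((EuclideanSpace.proj c : EuclideanSpace ℝ (Fin N) →L[ℝ] ℝ).integrable_comp hf)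
      ?_ (fun m => ?_) (fun m => ?_)
      (fun g hg hgc => tendsto_integral_mul_dyadicDilation X hX hη.continuous hη0 hη1 hr hg hgc)
      (fun m x hx => ?_) (fun x hx => ?_)
    · have := (EuclideanSpace.proj c : EuclideanSpace ℝ (Fin N) →L[ℝ] ℝ).continuous.comp
        (hw.continuous.const_smul (r ^ n)⁻¹)
      exact this
    · have := (hGs m).continuous
      change Continuous fun z => (r ^ n)⁻¹ * G m (r⁻¹ • z)
      fun_prop
    · have : HasCompactSupport (G m) := HasCompactSupport.intro (isCompact_closedBall 0 1)
        fun z hz => hG0 m z hz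
      obtain ⟨d, hd⟩ := this.exists_bound_of_continuous (hGs m).continuous
      refine ⟨(r ^ n)⁻¹ * d, fun z => ?_⟩
      rw [abs_mul, abs_of_nonneg (by positivity)]
      exact mul_le_mul_of_nonneg_left (hd _) (by positivity)
    · rw [hrew, abs_mul, abs_of_nonneg (by positivity)]
      exact mul_le_mul_of_nonneg_left ((hlim x hx).1 m) (by positivity)
    · rw [hcomp]
      simp_rw [hrew]
      exact (hlim x hx).2.const_mul _
  filter_upwards [ae_all_iff.2 hae] with x hx hxB
  have hfx : f x = v x := Set.indicator_of_mem (hfS x hxB (mem_closedBall_self hr.le)) v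
  rw [← hfx]
  ext c
  exact hx c hxB

end Reproducing

/-- A function which locally agrees almost everywhere with smooth functions has a smooth
representative. -/
lemma exists_contDiffOn_ae_eq_of_locally {n N : ℕ} {Ω : Set (EuclideanSpace ℝ (Fin n))}
    (hΩ : IsOpen Ω) {v : EuclideanSpace ℝ (Fin n) → EuclideanSpace ℝ (Fin N)}
    (h : ∀ x ∈ Ω, ∃ (U : Set (EuclideanSpace ℝ (Fin n)))
      (w : EuclideanSpace ℝ (Fin n) → EuclideanSpace ℝ (Fin N)),
      IsOpen U ∧ x ∈ U ∧ ContDiff ℝ ∞ w ∧ ∀ᵐ y, y ∈ U → v y = w y) :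
    ∃ vt : EuclideanSpace ℝ (Fin n) → EuclideanSpace ℝ (Fin N),
      ContDiffOn ℝ ∞ vt Ω ∧ ∀ᵐ x, x ∈ Ω → v x = vt x := by
  choose! U w hU hxU hw hae using h
  have heq : ∀ x ∈ Ω, ∀ y ∈ Ω, y ∈ U x → w y y = w x y := by
    intro x hx y hy hyx
    have hopen : IsOpen (U x ∩ U y) := (hU x hx).inter (hU y hy)
    have hrestr : w y =ᵐ[volume.restrict (U x ∩ U y)] w x := by
      rw [Filter.EventuallyEq, ae_restrict_iff' hopen.measurableSet]
      filter_upwards [hae x hx, hae y hy] with z hzx hzy hz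
      rw [← hzx hz.1, ← hzy hz.2]
    exact Measure.eqOn_open_of_ae_eq hrestr hopen (hw y hy).continuous.continuousOn
      (hw x hx).continuous.continuousOn ⟨hyx, hxU y hy⟩
  refine ⟨fun x => w x x, fun x hx => ContDiffAt.contDiffWithinAt ?_, ?_⟩
  · refine (hw x hx).contDiffAt.congr_of_eventuallyEq ?_
    filter_upwards [(hU x hx).mem_nhds (hxU x hx), hΩ.mem_nhds hx] with y hyU hyΩ
    exact heq x hx y hyΩ hyU
  · rw [ae_iff]
    refine measure_null_of_locally_null _ fun x hx => ?_
    have hxΩ : x ∈ Ω := by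
      by_contra hxΩ
      exact hx fun h => absurd h hxΩ
    refine ⟨_, Filter.inter_mem self_mem_nhdsWithin
      (mem_nhdsWithin_of_mem_nhds ((hU x hxΩ).mem_nhds (hxU x hxΩ))),
      measure_mono_null ?_ (ae_iff.1 (hae x hxΩ))⟩
    rintro y ⟨hy, hyU⟩ hcon
    refine hy fun hyΩ => ?_
    rw [hcon hyU]
    exact (heq x hxΩ y hyΩ hyU).symm

lemma contDiff_bump_smul {n N : ℕ} {Ω : Set (EuclideanSpace ℝ (Fin n))} (hΩ : IsOpen Ω)
    {u : EuclideanSpace ℝ (Fin n) → EuclideanSpace ℝ (Fin N)} (hu : ContDiffOn ℝ ∞ u Ω)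
    {x : EuclideanSpace ℝ (Fin n)} (θ : ContDiffBump x) (hθ : closedBall x θ.rOut ⊆ Ω) :
    ContDiff ℝ ∞ fun y => θ y • u y := by
  rw [contDiff_iff_contDiffAt]
  intro y
  by_cases hy : y ∈ Ω
  · exact θ.contDiffAt.smul (hu.contDiffAt (hΩ.mem_nhds hy))
  · have hy' : y ∉ tsupport θ := fun h => hy (hθ (θ.tsupport_eq ▸ h))
    refine (contDiffAt_const (c := (0 : EuclideanSpace ℝ (Fin N)))).congr_of_eventuallyEq ?_
    filter_upwards [(notMem_tsupport_iff_eventuallyEq.1 hy')] with z hz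
    simp [hz]

/-- Differentiating a reproducing formula estimates the gradient at a point by its integral. -/
lemma norm_fderiv_le_of_reproducing {n N : ℕ} {Ω : Set (EuclideanSpace ℝ (Fin n))} (hΩ : IsOpen Ω)
    {k : EuclideanSpace ℝ (Fin n) → EuclideanSpace ℝ (Fin N) →L[ℝ] EuclideanSpace ℝ (Fin N)}
    (hk : Continuous k) (hk0 : ∀ z ∉ closedBall 0 1, k z = 0) {M : ℝ} (hkM : ∀ z, ‖k z‖ ≤ M)
    {u : EuclideanSpace ℝ (Fin n) → EuclideanSpace ℝ (Fin N)} (hu : ContDiffOn ℝ ∞ u Ω)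
    {x : EuclideanSpace ℝ (Fin n)} {r δ : ℝ} (hr : 0 < r) (hδ : 0 < δ)
    (hsub : closedBall x (r + 2 * δ) ⊆ Ω)
    (hrep : ∀ᵐ y, y ∈ ball x δ → u y =
      (r ^ n)⁻¹ • ∫ z, k (r⁻¹ • (z - y)) ((closedBall x (r + δ)).indicator u z)) :
    ‖fderiv ℝ u x‖ ≤ (r ^ n)⁻¹ * (M * ∫ y in closedBall x r, ‖fderiv ℝ u y‖) := by
  let θ : ContDiffBump x := ⟨r + δ, r + 2 * δ, by positivity, by linarith⟩
  let g : EuclideanSpace ℝ (Fin n) → EuclideanSpace ℝ (Fin N) := fun y => θ y • u y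
  have hg : ContDiff ℝ ∞ g := contDiff_bump_smul hΩ hu θ hsub
  have hgc : HasCompactSupport g := θ.hasCompactSupport.smul_right
  have hgu : ∀ y ∈ closedBall x (r + δ), g y = u y := fun y hy => by
    simp [g, θ.one_of_mem_closedBall hy]
  let f : EuclideanSpace ℝ (Fin n) → EuclideanSpace ℝ (Fin N) →L[ℝ] EuclideanSpace ℝ (Fin N) :=
    fun t => k (-r⁻¹ • t)
  have hfc : Continuous f := hk.comp (continuous_const_smul _)
  have hf0 : ∀ t ∉ closedBall 0 r, f t = 0 := fun t ht => by
    refine hk0 _ fun hmem => ht ?_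
    have h1 := mem_closedBall_zero_iff.1 hmem
    rw [norm_smul, norm_neg, Real.norm_of_nonneg (by positivity), inv_mul_le_iff₀ hr, mul_one] at h1
    exact mem_closedBall_zero_iff.2 h1
  let Λ := ContinuousLinearMap.id ℝ (EuclideanSpace ℝ (Fin N) →L[ℝ] EuclideanSpace ℝ (Fin N))
  let W := convolution f g Λ volume
  have hWd := hgc.hasFDerivAt_convolution_right Λ (hfc.locallyIntegrable (μ := volume))
    (hg.of_le (by simp))
  have hWc : Continuous W := continuous_iff_continuousAt.2 fun y => (hWd y).continuousAt
  have hWc' : Continuous fun y => (r ^ n)⁻¹ • W y := hWc.const_smul (r ^ n)⁻¹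
  have hball : ball x δ ⊆ Ω := fun y hy =>
    hsub (mem_closedBall.2 (by have := mem_ball.1 hy; linarith))
  have hWrep : ∀ y ∈ ball x δ,
      ∫ z, k (r⁻¹ • (z - y)) ((closedBall x (r + δ)).indicator u z) = W y := by
    intro y hy
    simp only [W, convolution]
    rw [← integral_sub_left_eq_self _ volume y]
    refine integral_congr_ae (.of_forall fun t => ?_)
    have h1 : k (r⁻¹ • (y - t - y)) = f t := by
      simp only [f]
      congr 1
      rw [sub_sub_cancel_left, smul_neg, neg_smul]
    simp only [h1]
    by_cases ht : t ∈ closedBall 0 r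
    · have hmem : y - t ∈ closedBall x (r + δ) := by
        rw [mem_closedBall, dist_eq_norm]
        have h2 := mem_closedBall_zero_iff.1 ht
        have h3 := mem_ball.1 hy
        rw [dist_eq_norm] at h3
        calc ‖y - t - x‖ = ‖(y - x) - t‖ := by congr 1; abel
          _ ≤ ‖y - x‖ + ‖t‖ := norm_sub_le _ _
          _ ≤ r + δ := by linarith
      rw [Set.indicator_of_mem hmem, ← hgu _ hmem]
      rfl
    · rw [hf0 t ht]
      simp
  have huW : Set.EqOn u (fun y => (r ^ n)⁻¹ • W y) (ball x δ) := by
    have hae : u =ᵐ[volume.restrict (ball x δ)] fun y => (r ^ n)⁻¹ • W y := by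
      rw [Filter.EventuallyEq, ae_restrict_iff' measurableSet_ball]
      filter_upwards [hrep] with y hy hyB
      rw [hy hyB, hWrep y hyB]
    exact Measure.eqOn_open_of_ae_eq hae isOpen_ball (hu.continuousOn.mono hball)
      hWc'.continuousOn
  have hder : fderiv ℝ u x = (r ^ n)⁻¹ • convolution f (fderiv ℝ g)
      (Λ.precompR (EuclideanSpace ℝ (Fin n))) volume x := by
    have h1 : u =ᶠ[nhds x] fun y => (r ^ n)⁻¹ • W y :=
      Filter.eventuallyEq_of_mem (ball_mem_nhds x hδ) huW
    rw [h1.fderiv_eq]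
    exact ((hWd x).const_smul (r ^ n)⁻¹).fderiv
  rw [hder, norm_smul, Real.norm_of_nonneg (by positivity)]
  refine mul_le_mul_of_nonneg_left ?_ (by positivity)
  have hM0 : 0 ≤ M := (norm_nonneg _).trans (hkM 0)
  let F : EuclideanSpace ℝ (Fin n) → ℝ := (closedBall x r).indicator fun y => ‖fderiv ℝ u y‖
  have hrsub : closedBall x r ⊆ Ω := (closedBall_subset_closedBall (by linarith)).trans hsub
  have hFint : Integrable F := (integrable_indicator_iff measurableSet_closedBall).2 <|
    (((hu.continuousOn_fderiv_of_isOpen hΩ (by simp)).mono hrsub).norm).integrableOn_compact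
      (isCompact_closedBall _ _)
  have hbound : ∀ t, ‖Λ.precompR (EuclideanSpace ℝ (Fin n)) (f t) (fderiv ℝ g (x - t))‖ ≤
      M * F (x - t) := by
    intro t
    by_cases ht : t ∈ closedBall 0 r
    · have hmem : x - t ∈ closedBall x r := by
        simpa [mem_closedBall, dist_eq_norm] using ht
      have hd : fderiv ℝ g (x - t) = fderiv ℝ u (x - t) := by
        refine Filter.EventuallyEq.fderiv_eq ?_
        have : ball x (r + δ) ∈ nhds (x - t) := isOpen_ball.mem_nhds
          (closedBall_subset_ball (by linarith) hmem)
        filter_upwards [this] with y hy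
        exact hgu y (ball_subset_closedBall hy)
      simp only [F, Set.indicator_of_mem hmem]
      rw [hd]
      refine ContinuousLinearMap.opNorm_le_bound _ (by positivity) fun e => ?_
      rw [ContinuousLinearMap.precompR_apply]
      calc ‖f t (fderiv ℝ u (x - t) e)‖ ≤ ‖f t‖ * ‖fderiv ℝ u (x - t) e‖ :=
            ContinuousLinearMap.le_opNorm _ _
        _ ≤ M * (‖fderiv ℝ u (x - t)‖ * ‖e‖) :=
            mul_le_mul (hkM _) (ContinuousLinearMap.le_opNorm _ _) (norm_nonneg _) hM0
        _ = _ := by ring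
    · rw [hf0 t ht]
      have : 0 ≤ F (x - t) := Set.indicator_nonneg (fun _ _ => norm_nonneg _) _
      simp only [map_zero, zero_apply, norm_zero]
      positivity
  calc _ ≤ ∫ t, M * F (x - t) :=
        norm_integral_le_of_norm_le ((hFint.comp_sub_left x).const_mul M) (.of_forall hbound)
    _ = M * ∫ y in closedBall x r, ‖fderiv ℝ u y‖ := by
        rw [integral_const_mul, integral_sub_left_eq_self F volume x,
          integral_indicator measurableSet_closedBall]

theorem stmt_10 (n N : ℕ) (hn : 1 ≤ n) (hN : 1 ≤ N) (ℓ L : ℝ) (hℓ : 0 < ℓ) (hℓL : ℓ ≤ L) :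
    ∃ c : ℝ, 0 < c ∧
      ∀ (Ω : Set (EuclideanSpace ℝ (Fin n))) (Q : Fin n → Fin n → Fin N → Fin N → ℝ)
        (v : EuclideanSpace ℝ (Fin n) → EuclideanSpace ℝ (Fin N)),
        IsOpen Ω →
        (∀ i j a b, |Q i j a b| ≤ L) →
        (∀ (lam : Fin n → ℝ) (μ : Fin N → ℝ),
          ℓ * (∑ i, lam i ^ 2) * (∑ a, μ a ^ 2) ≤
            ∑ i, ∑ j, ∑ a, ∑ b, Q i j a b * lam i * lam j * μ a * μ b) →
        LocallyIntegrableOn v Ω →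
        (∀ φ : EuclideanSpace ℝ (Fin n) → EuclideanSpace ℝ (Fin N),
          ContDiff ℝ (⊤ : ℕ∞) φ → HasCompactSupport φ → tsupport φ ⊆ Ω →
          ∫ x in Ω, ∑ i, ∑ j, ∑ a, ∑ b,
            v x a * Q i j a b *
              fderiv ℝ (fun y => fderiv ℝ φ y (EuclideanSpace.single i 1) b) x
                (EuclideanSpace.single j 1) = 0) →
        ∃ vt : EuclideanSpace ℝ (Fin n) → EuclideanSpace ℝ (Fin N),
          ContDiffOn ℝ (⊤ : ℕ∞) vt Ω ∧ (∀ᵐ x ∂volume.restrict Ω, v x = vt x) ∧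
          ∀ (x₀ : EuclideanSpace ℝ (Fin n)) (R : ℝ), 0 < R → closedBall x₀ R ⊆ Ω →
            ∀ x ∈ ball x₀ (R / 2),
              ‖fderiv ℝ vt x‖ ≤ c / R ^ n * ∫ y in ball x₀ R, ‖fderiv ℝ vt y‖ := by
  obtain ⟨M, hM⟩ := exists_reproducing_kernel n N L hℓ
  refine ⟨2 ^ n * (|M| + 1), by positivity, fun Ω Q v hΩ hQL hQ hvi hv => ?_⟩
  obtain ⟨k, hk, hk0, hkM, hrep⟩ := hM Q hQL hQ
  obtain ⟨vt, hvt, hae⟩ := exists_contDiffOn_ae_eq_of_locally (v := v) hΩ fun x hx => by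
    obtain ⟨ε, hε, hsub⟩ := nhds_basis_closedBall.mem_iff.1 (hΩ.mem_nhds hx)
    have hε2 : 0 < ε / 2 := by positivity
    have hsub' : closedBall x (ε / 2 + ε / 2) ⊆ Ω := by rwa [add_halves]
    have hvint : Integrable ((closedBall x (ε / 2 + ε / 2)).indicator v) :=
      (integrable_indicator_iff measurableSet_closedBall).2
        (hvi.integrableOn_compact_subset hsub' (isCompact_closedBall _ _))
    exact ⟨ball x (ε / 2), fun y => ((ε / 2) ^ n)⁻¹ • ∫ z, k ((ε / 2)⁻¹ • (z - y))
        ((closedBall x (ε / 2 + ε / 2)).indicator v z), isOpen_ball, mem_ball_self hε2,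
      (contDiff_integral_comp_smul_sub hk hk0 hvint.locallyIntegrable hε2).const_smul
        ((ε / 2) ^ n)⁻¹,
      hrep Ω v hvi hv x (ε / 2) (ε / 2) hε2 hε2 hsub'⟩
  refine ⟨vt, hvt, (ae_restrict_iff' hΩ.measurableSet).2 hae, fun x₀ R hR hsub x hx => ?_⟩
  have hd := mem_ball.1 hx
  have hr : 0 < R / 2 := by positivity
  obtain ⟨δ, hδ, hδR⟩ : ∃ δ, 0 < δ ∧ R / 2 + 2 * δ + dist x x₀ ≤ R :=
    ⟨(R / 2 - dist x x₀) / 2, by linarith, by linarith⟩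
  have hsub1 : closedBall x (R / 2 + 2 * δ) ⊆ Ω := (closedBall_subset_closedBall' hδR).trans hsub
  have hsub2 : closedBall x (R / 2 + δ) ⊆ Ω :=
    (closedBall_subset_closedBall (by linarith)).trans hsub1
  have hrepvt : ∀ᵐ y, y ∈ ball x δ → vt y = ((R / 2) ^ n)⁻¹ • ∫ z, k ((R / 2)⁻¹ • (z - y))
      ((closedBall x (R / 2 + δ)).indicator vt z) := by
    filter_upwards [hae, hrep Ω v hvi hv x (R / 2) δ hr hδ hsub2] with y hy hy' hyB
    have hyΩ : y ∈ Ω := hsub1 (mem_closedBall.2 (by have := mem_ball.1 hyB; linarith))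
    rw [← hy hyΩ, hy' hyB]
    congr 1
    refine integral_congr_ae ?_
    filter_upwards [hae] with z hz
    by_cases hzS : z ∈ closedBall x (R / 2 + δ)
    · simp only [Set.indicator_of_mem hzS, hz (hsub2 hzS)]
    · simp only [Set.indicator_of_notMem hzS]
  have key := norm_fderiv_le_of_reproducing hΩ hk.continuous hk0
    (fun z => ((hkM z).trans (le_abs_self M)).trans (lt_add_one |M|).le) hvt hr hδ hsub1 hrepvt
  have hvint : IntegrableOn (fun y => ‖fderiv ℝ vt y‖) (ball x₀ R) :=
    ((((hvt.continuousOn_fderiv_of_isOpen hΩ (by simp)).mono hsub).norm).integrableOn_compact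
      (isCompact_closedBall _ _)).mono_set ball_subset_closedBall
  have hmono : ∫ y in closedBall x (R / 2), ‖fderiv ℝ vt y‖ ≤
      ∫ y in ball x₀ R, ‖fderiv ℝ vt y‖ := by
    refine setIntegral_mono_set hvint (.of_forall fun _ => norm_nonneg _)
      (LE.le.eventuallyLE ?_)
    intro y hy
    have h1 := mem_closedBall.1 hy
    exact mem_ball.2 ((dist_triangle y x x₀).trans_lt (by linarith))
  refine key.trans ?_
  calc _ ≤ ((R / 2) ^ n)⁻¹ * ((|M| + 1) * ∫ y in ball x₀ R, ‖fderiv ℝ vt y‖) := by gcongr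
    _ = _ := by
        rw [div_pow, inv_div]
        ring
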